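/- Assume G > 0, where G = m − A^o is the Azéma supermartingale of θ, with m the martingale part and A^o the dual optional projection of 1_{⟦θ,∞⟦}. Set Γ := G̃^{-1} • A^o and m̃ := m − G̃^{-1} • [m,m], where G̃ = m − A^o_−. Then the process G^{-1} satisfies the semimartingale decomposition G^{-1} = G_0^{-1} − G_−^{-2} • m̃ + G^{-1} • Γ; i.e. for all t, 1/G_t = 1/G_0 − ∫_{(0,t]} G_{s−}^{-2} dm̃_s + ∫_{(0,t]} G_s^{-1} dΓ_s. -/

import Mathlib

open MeasureTheory Filter Set Function

/-- A sequence of partitions of `[a,b]` with mesh tending to zero. -/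
structure PartitionSeq (a b : ℝ) where
  num : ℕ → ℕ
  pt : ℕ → ℕ → ℝ
  first : ∀ k, pt k 0 = a
  last : ∀ k, pt k (num k) = b
  mono : ∀ k, Monotone (pt k)
  mesh : ∀ ε > (0 : ℝ), ∀ᶠ k in atTop, ∀ i < num k, pt k (i + 1) - pt k i < ε

/-- Left-endpoint Riemann–Stieltjes sum of `H` against `F`. -/
noncomputable def leftSum {a b : ℝ} (P : PartitionSeq a b) (H F : ℝ → ℝ) (k : ℕ) : ℝ :=
  ∑ i ∈ Finset.range (P.num k), H (P.pt k i) * (F (P.pt k (i + 1)) - F (P.pt k i))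

/-- Sum of products of increments (approximating the quadratic covariation). -/
noncomputable def prodSum {a b : ℝ} (P : PartitionSeq a b) (X Y : ℝ → ℝ) (k : ℕ) : ℝ :=
  ∑ i ∈ Finset.range (P.num k),
    (X (P.pt k (i + 1)) - X (P.pt k i)) * (Y (P.pt k (i + 1)) - Y (P.pt k i))

variable {Ω : Type*}

/-- `J` is the stochastic integral `∫_(0,·] H_{s−} dX_s` (left-endpoint Riemann sums
converge in measure). -/
def IsStochInt {m0 : MeasurableSpace Ω} (μ : Measure Ω) (H X J : ℝ → Ω → ℝ) : Prop :=
  ∀ t : ℝ, 0 < t → ∀ P : PartitionSeq 0 t,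
    TendstoInMeasure μ (fun k ω => leftSum P (fun s => H s ω) (fun s => X s ω) k) atTop (J t)

/-- `B` is the quadratic covariation `[X,Y]`. -/
def IsQuadCovar {m0 : MeasurableSpace Ω} (μ : Measure Ω) (X Y B : ℝ → Ω → ℝ) : Prop :=
  ∀ t : ℝ, 0 < t → ∀ P : PartitionSeq 0 t,
    TendstoInMeasure μ (fun k ω => prodSum P (fun s => X s ω) (fun s => Y s ω) k) atTop (B t)


section DiscretePart

lemma bint {m0 : MeasurableSpace Ω} {μ : Measure Ω} [IsFiniteMeasure μ] {f : Ω → ℝ}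
    (hf : Measurable f) (C : ℝ) (h : ∀ ω, |f ω| ≤ C) : Integrable f μ :=
  Integrable.of_bound hf.aestronglyMeasurable C (Eventually.of_forall h)

/-- Bounded nonnegative submartingale in discrete time, in weighted form. -/
structure SubW {m0 : MeasurableSpace Ω} (μ : Measure Ω) (ℱ : Filtration ℕ m0)
    (V : ℕ → Ω → ℝ) (b : ℝ) : Prop where
  meas : ∀ j, Measurable[ℱ j] (V j)
  nonneg : ∀ j ω, 0 ≤ V j ω
  le : ∀ j ω, V j ω ≤ b
  sub : ∀ j (W : Ω → ℝ), Measurable[ℱ j] W → (∀ ω, 0 ≤ W ω) → ∀ C, (∀ ω, W ω ≤ C) →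
    0 ≤ ∫ ω, W ω * (V (j + 1) ω - V j ω) ∂μ

lemma SubW.meas' {m0 : MeasurableSpace Ω} {μ : Measure Ω} {ℱ : Filtration ℕ m0}
    {V : ℕ → Ω → ℝ} {b : ℝ} (h : SubW μ ℱ V b) (j : ℕ) : Measurable (V j) :=
  (h.meas j).mono (ℱ.le j) le_rfl

lemma SubW.measle {m0 : MeasurableSpace Ω} {μ : Measure Ω} {ℱ : Filtration ℕ m0}
    {V : ℕ → Ω → ℝ} {b : ℝ} (h : SubW μ ℱ V b) {i j : ℕ} (hij : i ≤ j) : Measurable[ℱ j] (V i) :=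
  (h.meas i).mono (ℱ.mono hij) le_rfl

lemma SubW.sq {m0 : MeasurableSpace Ω} {μ : Measure Ω} [IsProbabilityMeasure μ]
    {ℱ : Filtration ℕ m0}
    {V : ℕ → Ω → ℝ} {b : ℝ} (h : SubW μ ℱ V b) (j : ℕ) (W : Ω → ℝ) (hW : Measurable[ℱ j] W)
    (hW0 : ∀ ω, 0 ≤ W ω) (C : ℝ) (hC : ∀ ω, W ω ≤ C) :
    ∫ ω, W ω * (V (j + 1) ω - V j ω) ^ 2 ∂μ
      ≤ ∫ ω, W ω * (V (j + 1) ω ^ 2 - V j ω ^ 2) ∂μ := by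
  have hb : ∀ ω, 0 ≤ b := fun ω => (h.nonneg 0 ω).trans (h.le 0 ω)
  have hm1 := h.meas' (j+1)
  have hm0 := h.meas' j
  have hWm : Measurable W := hW.mono (ℱ.le j) le_rfl
  have key := h.sub j (fun ω => W ω * V j ω) (hW.mul (h.meas j))
    (fun ω => mul_nonneg (hW0 ω) (h.nonneg j ω)) (C * b)
    (fun ω => mul_le_mul (hC ω) (h.le j ω) (h.nonneg j ω) ((hW0 ω).trans (hC ω)))
  have i1 : Integrable (fun ω => W ω * (V (j + 1) ω ^ 2 - V j ω ^ 2)) μ := by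
    refine bint (by fun_prop) (C * b ^ 2) (fun ω => ?_)
    rw [abs_mul, abs_of_nonneg (hW0 ω)]
    have h1 := h.nonneg j ω; have h2 := h.le j ω
    have h3 := h.nonneg (j+1) ω; have h4 := h.le (j+1) ω
    have h5 : |V (j + 1) ω ^ 2 - V j ω ^ 2| ≤ b ^ 2 := by
      rw [abs_le]; constructor <;> nlinarith
    exact mul_le_mul (hC ω) h5 (abs_nonneg _) ((hW0 ω).trans (hC ω))
  have i2 : Integrable (fun ω => W ω * V j ω * (V (j + 1) ω - V j ω)) μ := by
    refine bint (by fun_prop) (C * b * b) (fun ω => ?_)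
    rw [abs_mul, abs_mul, abs_of_nonneg (hW0 ω), abs_of_nonneg (h.nonneg j ω)]
    have h1 := h.nonneg j ω; have h2 := h.le j ω
    have h3 := h.nonneg (j+1) ω; have h4 := h.le (j+1) ω
    have h5 : |V (j + 1) ω - V j ω| ≤ b := by
      rw [abs_le]; constructor <;> linarith
    have := hb ω
    exact mul_le_mul (mul_le_mul (hC ω) h2 h1 ((hW0 ω).trans (hC ω))) h5 (abs_nonneg _)
      (mul_nonneg ((hW0 ω).trans (hC ω)) this)
  have : ∀ ω, W ω * (V (j + 1) ω - V j ω) ^ 2 = W ω * (V (j + 1) ω ^ 2 - V j ω ^ 2)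
      - 2 * (W ω * V j ω * (V (j + 1) ω - V j ω)) := fun ω => by ring
  simp_rw [this]
  rw [integral_sub i1 (i2.const_mul 2), integral_const_mul]
  linarith

/-- reset process: reference value and number of `ε`-moves -/
noncomputable def rst (ε : ℝ) (X : ℕ → ℝ) : ℕ → ℝ × ℕ
  | 0 => (X 0, 0)
  | j + 1 => if ε < |X (j + 1) - (rst ε X j).1| then (X (j + 1), (rst ε X j).2 + 1)
      else rst ε X j

lemma rst_meas {Ω' : Type*} [MeasurableSpace Ω'] (ε : ℝ) (V : ℕ → Ω' → ℝ) (J : ℕ)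
    (h : ∀ i ≤ J, Measurable (V i)) : Measurable (fun ω => rst ε (fun j => V j ω) J) := by
  induction J with
  | zero => simpa [rst] using (h 0 le_rfl).prodMk measurable_const
  | succ J ih =>
    have ih' := ih (fun i hi => h i (by omega))
    have hV := h (J+1) le_rfl
    simp only [rst]
    refine Measurable.ite ?_ ?_ ih'
    · exact measurableSet_lt measurable_const
        (continuous_abs.measurable.comp (hV.sub ih'.fst))
    · exact hV.prodMk (by
        have := ih'.snd
        exact this.add_const 1)

lemma rst_near (ε : ℝ) (hε : 0 ≤ ε) (X : ℕ → ℝ) (J : ℕ) : |X J - (rst ε X J).1| ≤ ε := by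
  induction J with
  | zero => simpa [rst] using hε
  | succ J ih =>
    simp only [rst]
    split_ifs with h
    · simpa using hε
    · exact not_lt.1 h

lemma rst_cnt_mono (ε : ℝ) (X : ℕ → ℝ) : Monotone (fun J => (rst ε X J).2) := by
  refine monotone_nat_of_le_succ fun J => ?_
  simp only [rst]
  split_ifs <;> simp

lemma rst_const (ε : ℝ) (X : ℕ → ℝ) (i j : ℕ) (hij : i ≤ j)
    (h : (rst ε X j).2 ≤ (rst ε X i).2) : rst ε X j = rst ε X i := by
  induction j, hij using Nat.le_induction with
  | base => rfl
  | succ j hij ih =>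
    have h1 : (rst ε X i).2 ≤ (rst ε X j).2 := rst_cnt_mono ε X hij
    simp only [rst] at h ⊢
    split_ifs at h ⊢ with hc
    · simp at h; omega
    · exact ih h

lemma rst_inc (ε : ℝ) (hε : 0 ≤ ε) (X : ℕ → ℝ) (i j : ℕ) (hij : i ≤ j)
    (h : 2 * ε < |X j - X i|) : (rst ε X i).2 + 1 ≤ (rst ε X j).2 := by
  by_contra hc
  have := rst_const ε X i j hij (by omega)
  have h1 := rst_near ε hε X i
  have h2 := rst_near ε hε X j
  rw [this] at h2
  rw [abs_le] at h1 h2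
  rcases lt_abs.1 h with h | h <;> linarith

lemma rst_range (ε : ℝ) (X : ℕ → ℝ) (b : ℝ) (h0 : ∀ j, 0 ≤ X j) (hb : ∀ j, X j ≤ b) (J : ℕ) :
    0 ≤ (rst ε X J).1 ∧ (rst ε X J).1 ≤ b ∧ (rst ε X J).2 ≤ J := by
  induction J with
  | zero => simp [rst, h0, hb]
  | succ J ih =>
    simp only [rst]
    split_ifs
    · exact ⟨h0 _, hb _, by simpa using ih.2.2⟩
    · exact ⟨ih.1, ih.2.1, ih.2.2.trans (by omega)⟩

lemma SubW.cnt {m0 : MeasurableSpace Ω} {μ : Measure Ω} [IsProbabilityMeasure μ]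
    {ℱ : Filtration ℕ m0} {V : ℕ → Ω → ℝ} {b : ℝ} (h : SubW μ ℱ V b) (ε : ℝ) (hε : 0 < ε) (N : ℕ) :
    ε ^ 2 * ∫ ω, ((rst ε (fun j => V j ω) N).2 : ℝ) ∂μ ≤ b ^ 2 := by
  have hm : ∀ J, Measurable (fun ω => rst ε (fun j => V j ω) J) := fun J =>
    rst_meas ε V J (fun i _ => h.meas' i)
  have hm1 : ∀ J, Measurable (fun ω => (rst ε (fun j => V j ω) J).1) := fun J => (hm J).fst
  have hm2 : ∀ J, Measurable (fun ω => ((rst ε (fun j => V j ω) J).2 : ℝ)) := fun J =>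
    (measurable_from_top (f := fun n : ℕ => (n : ℝ))).comp (hm J).snd
  have hr := fun J ω => rst_range ε (fun j => V j ω) b (fun j => h.nonneg j ω) (fun j => h.le j ω) J
  have hintg : ∀ J, Integrable (fun ω => ((rst ε (fun j => V j ω) J).2 : ℝ)) μ := fun J => by
    refine bint (hm2 J) J (fun ω => ?_)
    rw [abs_of_nonneg (by positivity)]
    exact_mod_cast (hr J ω).2.2
  have hY : ∀ J, Integrable (fun ω => 2 * (rst ε (fun j => V j ω) J).1 * V J ω
      - (rst ε (fun j => V j ω) J).1 ^ 2) μ := fun J => by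
    have := hm1 J
    have := h.meas' J
    refine bint (by fun_prop) (3 * b ^ 2) (fun ω => ?_)
    have h1 := hr J ω
    have h2 := h.nonneg J ω
    have h3 := h.le J ω
    have h4 : (rst ε (fun j => V j ω) J).1 * V J ω ≤ b * b := mul_le_mul h1.2.1 h3 h2 (h2.trans h3)
    have h5 : 0 ≤ (rst ε (fun j => V j ω) J).1 * V J ω := mul_nonneg h1.1 h2
    rw [abs_le]
    constructor <;> nlinarith
  have key : ∀ J, ε ^ 2 * ∫ ω, ((rst ε (fun j => V j ω) J).2 : ℝ) ∂μ ≤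
      ∫ ω, (2 * (rst ε (fun j => V j ω) J).1 * V J ω - (rst ε (fun j => V j ω) J).1 ^ 2) ∂μ := by
    intro J
    induction J with
    | zero =>
      simp only [rst, Nat.cast_zero, integral_zero, mul_zero]
      refine integral_nonneg fun ω => ?_
      simp only [Pi.zero_apply]
      nlinarith [sq_nonneg (V 0 ω)]
    | succ J ih =>
      have hs := h.sub J (fun ω => 2 * (rst ε (fun j => V j ω) J).1)
        ((@rst_meas Ω (ℱ J) ε V J (fun i hi => h.measle hi)).fst.const_mul 2)
        (fun ω => by have := hr J ω; linarith [this.1]) (2 * b)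
        (fun ω => by have := hr J ω; linarith [this.2.1])
      have hsi : Integrable (fun ω => 2 * (rst ε (fun j => V j ω) J).1 * (V (J + 1) ω - V J ω)) μ := by
        have := hm1 J
        have := h.meas' J
        have := h.meas' (J+1)
        refine bint (by fun_prop) (2 * b * b) (fun ω => ?_)
        have h1 := hr J ω
        rw [abs_mul]
        have h2 := h.nonneg J ω; have h3 := h.le J ω
        have h4 := h.nonneg (J+1) ω; have h5 := h.le (J+1) ω
        refine mul_le_mul ?_ ?_ (abs_nonneg _) (by linarith)
        · rw [abs_of_nonneg (by linarith [h1.1])]; linarith [h1.2.1]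
        · rw [abs_le]; constructor <;> linarith
      have hle : ∫ ω, ((2 * (rst ε (fun j => V j ω) J).1 * V J ω - (rst ε (fun j => V j ω) J).1 ^ 2)
          + 2 * (rst ε (fun j => V j ω) J).1 * (V (J + 1) ω - V J ω)
          + (ε ^ 2 * ((rst ε (fun j => V j ω) (J+1)).2 : ℝ)
            - ε ^ 2 * ((rst ε (fun j => V j ω) J).2 : ℝ))) ∂μ ≤
          ∫ ω, (2 * (rst ε (fun j => V j ω) (J+1)).1 * V (J+1) ω
            - (rst ε (fun j => V j ω) (J+1)).1 ^ 2) ∂μ := by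
        refine integral_mono (((hY J).add hsi).add
          (((hintg (J+1)).const_mul _).sub ((hintg J).const_mul _))) (hY (J+1)) (fun ω => ?_)
        simp only [rst]
        split_ifs with hc
        · push_cast
          have : ε ^ 2 ≤ |V (J + 1) ω - (rst ε (fun j => V j ω) J).1| ^ 2 := by gcongr
          rw [sq_abs] at this
          nlinarith
        · nlinarith
      have hA : Integrable (fun ω => (2 * (rst ε (fun j => V j ω) J).1 * V J ω
          - (rst ε (fun j => V j ω) J).1 ^ 2)
          + 2 * (rst ε (fun j => V j ω) J).1 * (V (J + 1) ω - V J ω)) μ := (hY J).add hsi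
      have hB : Integrable (fun ω => (ε ^ 2 * ((rst ε (fun j => V j ω) (J+1)).2 : ℝ)
            - ε ^ 2 * ((rst ε (fun j => V j ω) J).2 : ℝ))) μ :=
        ((hintg (J+1)).const_mul _).sub ((hintg J).const_mul _)
      rw [integral_add hA hB, integral_add (hY J) hsi,
        integral_sub ((hintg (J+1)).const_mul _) ((hintg J).const_mul _),
        integral_const_mul, integral_const_mul] at hle
      linarith
  refine (key N).trans ?_
  have : ∫ ω, (2 * (rst ε (fun j => V j ω) N).1 * V N ω - (rst ε (fun j => V j ω) N).1 ^ 2) ∂μ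
      ≤ ∫ ω, b ^ 2 ∂μ := by
    refine integral_mono (hY N) (integrable_const _) (fun ω => ?_)
    have h2 := h.nonneg N ω; have h3 := h.le N ω
    simp only
    nlinarith [sq_nonneg ((rst ε (fun j => V j ω) N).1 - V N ω)]
  simpa using this

end DiscretePart

section DiscretePartTwo

/-- some `ε`-move from the start of cell `i` among the first `A` points of the cell -/
def badB (ε : ℝ) (R : ℕ) (X : ℕ → ℝ) (i A : ℕ) : Prop :=
  ∃ a < A, ε < |X (i * R + a) - X (i * R)|

open Classical in
/-- number of bad cells among the first `i` ones -/
noncomputable def nbad (ε : ℝ) (R : ℕ) (X : ℕ → ℝ) : ℕ → ℕ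
  | 0 => 0
  | i + 1 => nbad ε R X i + if badB ε R X i R then 1 else 0

open Classical in
/-- indicator of the bad indices inside the first `p` bad cells -/
noncomputable def gbad (ε : ℝ) (R p : ℕ) (X : ℕ → ℝ) (j : ℕ) : ℝ :=
  if nbad ε R X (j / R) < p ∧ badB ε R X (j / R) (j % R + 1) then 1 else 0

/-- stopped partial sums -/
noncomputable def trS (l : ℝ) (D : ℕ → ℝ) : ℕ → ℝ
  | 0 => 0
  | j + 1 => trS l D j + if |trS l D j| ≤ l then D j else 0

lemma badB_meas {Ω' : Type*} [MeasurableSpace Ω'] (ε : ℝ) (R : ℕ) (V : ℕ → Ω' → ℝ) (i A : ℕ)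
    (h : ∀ a < A, Measurable (V (i * R + a))) (h0 : Measurable (V (i * R))) :
    MeasurableSet {ω | badB ε R (fun j => V j ω) i A} := by
  have : {ω | badB ε R (fun j => V j ω) i A} =
      ⋃ a ∈ {a | a < A}, {ω | ε < |V (i * R + a) ω - V (i * R) ω|} := by
    ext ω; simp [badB]
  rw [this]
  refine MeasurableSet.biUnion (to_countable _) (fun a ha => ?_)
  exact measurableSet_lt measurable_const (continuous_abs.measurable.comp ((h a ha).sub h0))

lemma nbad_meas {Ω' : Type*} [MeasurableSpace Ω'] (ε : ℝ) (R : ℕ) (V : ℕ → Ω' → ℝ) (i : ℕ)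
    (h : ∀ j ≤ i * R, Measurable (V j)) : Measurable (fun ω => nbad ε R (fun j => V j ω) i) := by
  induction i with
  | zero => simp only [nbad]; exact measurable_const
  | succ i ih =>
    simp only [nbad]
    refine (ih (fun j hj => h j (hj.trans (by nlinarith)))).add ?_
    refine Measurable.ite (badB_meas ε R V i R (fun a ha => h _ ?_) (h _ ?_))
      measurable_const measurable_const
    · rw [add_mul]; omega
    · rw [add_mul]; omega

lemma gbad_meas {Ω' : Type*} [MeasurableSpace Ω'] (ε : ℝ) (R p : ℕ) (V : ℕ → Ω' → ℝ) (j : ℕ)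
    (h : ∀ i ≤ j, Measurable (V i)) : Measurable (fun ω => gbad ε R p (fun j => V j ω) j) := by
  unfold gbad
  have hj : j / R * R + j % R = j := Nat.div_add_mod' j R
  refine Measurable.ite (MeasurableSet.inter ?_ (badB_meas ε R V _ _ (fun a ha => h _ ?_) (h _ ?_)))
      measurable_const measurable_const
  · exact (nbad_meas ε R V _ (fun i hi => h i (by omega))) (measurableSet_Iio (a := p))
  · omega
  · omega

lemma trS_meas {Ω' : Type*} [MeasurableSpace Ω'] (l : ℝ) (D : ℕ → Ω' → ℝ) (J : ℕ)
    (h : ∀ j < J, Measurable (D j)) : Measurable (fun ω => trS l (fun j => D j ω) J) := by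
  induction J with
  | zero => simp only [trS]; exact measurable_const
  | succ J ih =>
    have ih' := ih (fun j hj => h j (by omega))
    simp only [trS]
    refine ih'.add (Measurable.ite ?_ (h J (by omega)) measurable_const)
    exact measurableSet_le (continuous_abs.measurable.comp ih') measurable_const

lemma trS_bound (l : ℝ) (hl : 0 ≤ l) (D : ℕ → ℝ) (C : ℝ) (hC : 0 ≤ C) (hD : ∀ j, |D j| ≤ C) (J : ℕ) :
    |trS l D J| ≤ l + C := by
  induction J with
  | zero => simp only [trS, abs_zero]; linarith
  | succ J ih =>
    simp only [trS]
    split_ifs with h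
    · exact (abs_add_le _ _).trans (add_le_add h (hD J))
    · simpa using ih

lemma trS_spec (l : ℝ) (D : ℕ → ℝ) (J : ℕ) :
    (∃ J' ≤ J, l < |∑ j ∈ Finset.range J', D j|) → l < |trS l D J| := by
  have key : ∀ J, (l < |trS l D J|) ∨
      ((∀ J' ≤ J, ¬ l < |∑ j ∈ Finset.range J', D j|) ∧ trS l D J = ∑ j ∈ Finset.range J, D j) := by
    intro J
    induction J with
    | zero =>
      by_cases h : l < |(0:ℝ)|
      · left; simpa [trS] using h
      · right; refine ⟨fun J' hJ' => ?_, by simp [trS]⟩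
        have : J' = 0 := by omega
        subst this; simpa using h
    | succ J ih =>
      rcases ih with h | ⟨h1, h2⟩
      · left; simp only [trS]; rw [if_neg (not_le.2 h)]; simpa using h
      · have h3 := h1 J le_rfl
        have h4 : trS l D (J+1) = ∑ j ∈ Finset.range (J+1), D j := by
          simp only [trS]
          rw [h2, if_pos (not_lt.1 h3), Finset.sum_range_succ]
        by_cases h5 : l < |trS l D (J+1)|
        · left; exact h5
        · right
          refine ⟨fun J' hJ' => ?_, h4⟩
          rcases Nat.le_succ_iff.1 hJ' with h | h
          · exact h1 J' h
          · rw [h, ← h4]; exact h5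
  rintro ⟨J', hJ', h⟩
  rcases key J with h1 | ⟨h1, _⟩
  · exact h1
  · exact absurd h (h1 J' hJ')

lemma gbad_01 (ε : ℝ) (R p : ℕ) (X : ℕ → ℝ) (j : ℕ) : 0 ≤ gbad ε R p X j ∧ gbad ε R p X j ≤ 1 ∧
    gbad ε R p X j ^ 2 = gbad ε R p X j := by
  unfold gbad; split_ifs <;> simp

lemma nbad_mono (ε : ℝ) (R : ℕ) (X : ℕ → ℝ) : Monotone (nbad ε R X) :=
  monotone_nat_of_le_succ fun i => by simp [nbad]

lemma nbad_le_cnt (ε : ℝ) (hε : 0 ≤ ε) (R : ℕ) (X : ℕ → ℝ) (i : ℕ) :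
    nbad (2 * ε) R X i ≤ (rst ε X (i * R)).2 := by
  induction i with
  | zero => simp [nbad]
  | succ i ih =>
    simp only [nbad]
    split_ifs with h
    · obtain ⟨a, ha, h⟩ := h
      have h1 := rst_inc ε hε X (i * R) (i * R + a) (by omega) h
      have h2 : (rst ε X (i * R + a)).2 ≤ (rst ε X ((i+1) * R)).2 :=
        rst_cnt_mono ε X (by rw [add_mul]; omega)
      omega
    · have h2 : (rst ε X (i * R)).2 ≤ (rst ε X ((i+1) * R)).2 :=
        rst_cnt_mono ε X (by rw [add_mul]; omega)
      omega

lemma sum_tail (F : ℕ → ℝ) (s R : ℕ) :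
    ∑ a ∈ Finset.range R, (if s ≤ a then (1:ℝ) else 0) * (F (a + 1) - F a)
      = if s ≤ R then F R - F s else 0 := by
  induction R with
  | zero => by_cases h : s ≤ 0 <;> simp_all
  | succ R ih =>
    rw [Finset.sum_range_succ, ih]
    by_cases h : s ≤ R
    · rw [if_pos h, if_pos h, if_pos (by omega)]; ring
    · rw [if_neg h, if_neg h]
      by_cases h' : s ≤ R + 1
      · have : s = R + 1 := by omega
        subst this; simp
      · simp [h']

lemma gsum_bound (ε : ℝ) (R p : ℕ) (hR : 0 < R) (X f : ℕ → ℝ) (η : ℝ) (hη : 0 ≤ η) (I : ℕ)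
    (h : ∀ i < I, ∀ a < R, ε < |X (i * R + a) - X (i * R)| →
      |f ((i + 1) * R) - f (i * R + a)| ≤ η) :
    |∑ j ∈ Finset.range (I * R), gbad ε R p X j * (f (j + 1) - f j)| ≤ η * p := by
  classical
  suffices hs : |∑ j ∈ Finset.range (I * R), gbad ε R p X j * (f (j + 1) - f j)|
      ≤ η * (min (nbad ε R X I) p : ℕ) by
    refine hs.trans (mul_le_mul_of_nonneg_left ?_ hη)
    exact_mod_cast min_le_right _ _
  induction I with
  | zero => simp [nbad]
  | succ I ih =>
    have ih' := ih (fun i hi => h i (by omega))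
    rw [add_mul, one_mul, Finset.sum_range_add]
    refine (abs_add_le _ _).trans ?_
    have hd : ∀ a ∈ Finset.range R, gbad ε R p X (I * R + a) * (f (I * R + a + 1) - f (I * R + a))
        = (if nbad ε R X I < p ∧ badB ε R X I (a + 1) then (1:ℝ) else 0)
          * (f (I * R + a + 1) - f (I * R + a)) := by
      intro a ha
      have ha := Finset.mem_range.1 ha
      have h1 : (I * R + a) / R = I := by
        rw [mul_comm, Nat.mul_add_div hR, Nat.div_eq_of_lt ha, add_zero]
      have h2 : (I * R + a) % R = a := by
        rw [mul_comm, Nat.mul_add_mod, Nat.mod_eq_of_lt ha]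
      simp only [gbad, h1, h2]
    rw [Finset.sum_congr rfl hd]
    by_cases hp : nbad ε R X I < p
    · by_cases hb : badB ε R X I R
      · have hb' : ∃ a, a < R ∧ ε < |X (I * R + a) - X (I * R)| := hb
        have hs := Nat.find_spec hb'
        set s := Nat.find hb' with hsdef
        have he : ∀ a ∈ Finset.range R, (if nbad ε R X I < p ∧ badB ε R X I (a + 1) then (1:ℝ) else 0)
          * (f (I * R + a + 1) - f (I * R + a)) = (if s ≤ a then (1:ℝ) else 0) *
            ((fun a => f (I * R + a)) (a + 1) - (fun a => f (I * R + a)) a) := by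
          intro a ha
          have ha := Finset.mem_range.1 ha
          have : (nbad ε R X I < p ∧ badB ε R X I (a + 1)) ↔ s ≤ a := by
            constructor
            · rintro ⟨_, a', ha', h'⟩
              have := Nat.find_min' hb' ⟨by omega, h'⟩
              omega
            · intro hsa
              exact ⟨hp, s, by omega, hs.2⟩
          simp only [this, add_assoc]
        rw [Finset.sum_congr rfl he, sum_tail (fun a => f (I * R + a)) s R, if_pos hs.1.le]
        have h1 := h I (by omega) s hs.1 hs.2
        have h2 : min (nbad ε R X (I + 1)) p = min (nbad ε R X I) p + 1 := by
          simp only [nbad, if_pos hb]; omega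
        rw [h2]; push_cast
        rw [add_mul, one_mul] at h1
        simp only at *
        push_cast at ih'
        linarith
      · have he : ∀ a ∈ Finset.range R, (if nbad ε R X I < p ∧ badB ε R X I (a + 1) then (1:ℝ) else 0)
          * (f (I * R + a + 1) - f (I * R + a)) = 0 := by
          intro a ha
          have ha := Finset.mem_range.1 ha
          rw [if_neg, zero_mul]
          rintro ⟨_, a', ha', h'⟩
          exact hb ⟨a', by omega, h'⟩
        rw [Finset.sum_congr rfl he]
        simpa [nbad, if_neg hb] using ih'
    · have h2 : min (nbad ε R X (I + 1)) p = min (nbad ε R X I) p := by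
        have : nbad ε R X I ≤ nbad ε R X (I+1) := nbad_mono ε R X (by omega)
        omega
      rw [h2]
      simpa [hp] using ih'

lemma key_pw (ε b : ℝ) (hε : 0 ≤ ε) (R p : ℕ) (X H : ℕ → ℝ) (hX0 : ∀ j, 0 ≤ X j)
    (hXb : ∀ j, X j ≤ b) (hH : ∀ j, |H j| ≤ 1) (j : ℕ) :
    |H j * (if nbad ε R X (j / R) < p then 1 else 0) * (X j - X (j / R * R))|
      ≤ ε + b * gbad ε R p X j := by
  have hb : 0 ≤ b := (hX0 0).trans (hXb 0)
  have hj : j / R * R + j % R = j := Nat.div_add_mod' j R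
  have hg := gbad_01 ε R p X j
  by_cases h1 : nbad ε R X (j / R) < p
  · rw [if_pos h1, mul_one, abs_mul]
    refine (mul_le_of_le_one_left (abs_nonneg _) (hH j)).trans ?_
    by_cases h2 : badB ε R X (j / R) (j % R + 1)
    · have : gbad ε R p X j = 1 := by rw [gbad, if_pos ⟨h1, h2⟩]
      rw [this, abs_le]
      constructor <;> linarith [hX0 j, hXb j, hX0 (j / R * R), hXb (j / R * R)]
    · have : |X j - X (j / R * R)| ≤ ε := by
        by_contra hc
        exact h2 ⟨j % R, by omega, by rw [hj]; exact not_le.1 hc⟩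
      linarith [mul_nonneg hb hg.1]
  · rw [if_neg h1]
    simp only [mul_zero, zero_mul, abs_zero]
    linarith [mul_nonneg hb hg.1]

end DiscretePartTwo

section DiscretePartThree

lemma chi_meas {Ω' : Type*} [MeasurableSpace Ω'] (l : ℝ) (S : Ω' → ℝ) (hS : Measurable S) :
    Measurable fun ω => if |S ω| ≤ l then S ω else 0 :=
  Measurable.ite (measurableSet_le (continuous_abs.measurable.comp hS) measurable_const)
    hS measurable_const

lemma nb_ite_meas {Ω' : Type*} [MeasurableSpace Ω'] (ε : ℝ) (R p : ℕ) (V : ℕ → Ω' → ℝ) (i : ℕ)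
    (h : ∀ j ≤ i * R, Measurable (V j)) :
    Measurable (fun ω => if nbad ε R (fun j => V j ω) i < p then (1:ℝ) else 0) :=
  Measurable.ite ((nbad_meas ε R V i h) (measurableSet_Iio (a := p))) measurable_const
    measurable_const

lemma SubW.key {m0 : MeasurableSpace Ω} {μ : Measure Ω} [IsProbabilityMeasure μ]
    {ℱ : Filtration ℕ m0} {V : ℕ → Ω → ℝ} {b : ℝ} (h : SubW μ ℱ V b) (hb : 0 ≤ b)
    (H : ℕ → Ω → ℝ) (hHm : ∀ j, Measurable[ℱ j] (H j)) (hH : ∀ j ω, |H j ω| ≤ 1)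
    (ε l : ℝ) (hε : 0 ≤ ε) (hl : 0 < l) (R p I : ℕ) :
    μ.real {ω | ∃ J ≤ I * R, l < |∑ j ∈ Finset.range J,
        H j ω * (V j ω - V (j / R * R) ω) * (V (j + 1) ω - V j ω)|}
      ≤ μ.real {ω | p ≤ nbad ε R (fun j => V j ω) I}
        + (2 * l * ε * b + 2 * ε ^ 2 * b ^ 2
          + 2 * l * b * ∫ ω, ∑ j ∈ Finset.range (I * R),
              gbad ε R p (fun j => V j ω) j * (V (j + 1) ω - V j ω) ∂μ
          + 2 * b ^ 2 * ∫ ω, ∑ j ∈ Finset.range (I * R),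
              gbad ε R p (fun j => V j ω) j * (V (j + 1) ω ^ 2 - V j ω ^ 2) ∂μ) / l ^ 2 := by
  classical
  set g : ℕ → Ω → ℝ := fun j ω => gbad ε R p (fun j => V j ω) j with hg
  set K : ℕ → Ω → ℝ := fun j ω => H j ω * (if nbad ε R (fun j => V j ω) (j / R) < p then 1 else 0)
    * (V j ω - V (j / R * R) ω) with hK
  set D : ℕ → Ω → ℝ := fun j ω => K j ω * (V (j + 1) ω - V j ω) with hD
  set S : ℕ → Ω → ℝ := fun J ω => trS l (fun j => D j ω) J with hS
  have hdiv : ∀ j, j / R * R ≤ j := fun j => Nat.div_mul_le_self j R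
  have gm : ∀ j, Measurable[ℱ j] (g j) := fun j =>
    @gbad_meas Ω (ℱ j) ε R p V j (fun i hi => h.measle hi)
  have gm' : ∀ j, Measurable (g j) := fun j => (gm j).mono (ℱ.le j) le_rfl
  have g01 : ∀ j ω, 0 ≤ g j ω ∧ g j ω ≤ 1 := fun j ω =>
    ⟨(gbad_01 ε R p (fun j => V j ω) j).1, (gbad_01 ε R p (fun j => V j ω) j).2.1⟩
  have gsq : ∀ j ω, g j ω ^ 2 = g j ω := fun j ω => (gbad_01 ε R p (fun j => V j ω) j).2.2
  have Km : ∀ j, Measurable[ℱ j] (K j) := fun j => by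
    refine ((hHm j).mul ?_).mul ((h.meas j).sub (h.measle (hdiv j)))
    exact @nb_ite_meas Ω (ℱ j) ε R p V _ (fun i hi => h.measle (hi.trans (hdiv j)))
  have Kb : ∀ j ω, |K j ω| ≤ ε + b * g j ω := fun j ω =>
    key_pw ε b hε R p (fun j => V j ω) (fun j => H j ω) (fun j => h.nonneg j ω)
      (fun j => h.le j ω) (fun j => hH j ω) j
  have Kb' : ∀ j ω, |K j ω| ≤ ε + b := fun j ω => (Kb j ω).trans (by
    have := g01 j ω; nlinarith)
  have dV : ∀ j ω, |V (j + 1) ω - V j ω| ≤ b := fun j ω => by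
    rw [abs_le]; constructor <;>
      linarith [h.nonneg j ω, h.le j ω, h.nonneg (j+1) ω, h.le (j+1) ω]
  have dU : ∀ j ω, |V (j + 1) ω ^ 2 - V j ω ^ 2| ≤ b ^ 2 := fun j ω => by
    rw [abs_le]; constructor <;>
      nlinarith [h.nonneg j ω, h.le j ω, h.nonneg (j+1) ω, h.le (j+1) ω]
  have Dm : ∀ j, Measurable[ℱ (j + 1)] (D j) := fun j =>
    ((Km j).mono (ℱ.mono (Nat.le_succ j)) le_rfl).mul ((h.meas (j+1)).sub (h.measle (Nat.le_succ j)))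
  have Db : ∀ j ω, |D j ω| ≤ (ε + b) * b := fun j ω => by
    simp only [hD, abs_mul]
    exact mul_le_mul (Kb' j ω) (dV j ω) (abs_nonneg _) (by linarith)
  have Sm : ∀ J, Measurable[ℱ J] (S J) := fun J =>
    @trS_meas Ω (ℱ J) l D J (fun j hj => (Dm j).mono (ℱ.mono hj) le_rfl)
  have Sm' : ∀ J, Measurable (S J) := fun J => (Sm J).mono (ℱ.le J) le_rfl
  set B := l + (ε + b) * b with hB
  have Sb : ∀ J ω, |S J ω| ≤ B := fun J ω =>
    trS_bound l hl.le (fun j => D j ω) _ (mul_nonneg (by linarith) hb) (fun j => Db j ω) J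
  have iS : ∀ J, Integrable (fun ω => S J ω ^ 2) μ := fun J => by
    refine bint ((Sm' J).pow_const 2) (B ^ 2) (fun ω => ?_)
    rw [abs_pow]
    exact pow_le_pow_left₀ (abs_nonneg _) (Sb J ω) 2
  have i1 : ∀ j, Integrable (fun ω => V (j + 1) ω - V j ω) μ := fun j =>
    bint ((h.meas' (j+1)).sub (h.meas' j)) b (dV j)
  have i2 : ∀ j, Integrable (fun ω => V (j + 1) ω ^ 2 - V j ω ^ 2) μ := fun j =>
    bint (((h.meas' (j+1)).pow_const 2).sub ((h.meas' j).pow_const 2)) (b ^ 2) (dU j)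
  have ibm : ∀ {f w : Ω → ℝ}, Integrable f μ → Measurable w → (∀ C, (∀ ω, |w ω| ≤ C) →
      Integrable (fun ω => w ω * f ω) μ) := fun {f w} hf hw C hC =>
    hf.bdd_mul hw.aestronglyMeasurable (Eventually.of_forall hC)
  have i3 : ∀ j, Integrable (fun ω => g j ω * (V (j + 1) ω - V j ω)) μ := fun j =>
    ibm (i1 j) (gm' j) 1 (fun ω => abs_le.2 ⟨by linarith [(g01 j ω).1], (g01 j ω).2⟩)
  have i4 : ∀ j, Integrable (fun ω => g j ω * (V (j + 1) ω ^ 2 - V j ω ^ 2)) μ := fun j =>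
    ibm (i2 j) (gm' j) 1 (fun ω => abs_le.2 ⟨by linarith [(g01 j ω).1], (g01 j ω).2⟩)
  -- one step
  have step : ∀ j, ∫ ω, S (j + 1) ω ^ 2 ∂μ ≤ ∫ ω, S j ω ^ 2 ∂μ
      + (2 * l * ε * ∫ ω, (V (j + 1) ω - V j ω) ∂μ
        + 2 * ε ^ 2 * ∫ ω, (V (j + 1) ω ^ 2 - V j ω ^ 2) ∂μ
        + 2 * l * b * ∫ ω, g j ω * (V (j + 1) ω - V j ω) ∂μ
        + 2 * b ^ 2 * ∫ ω, g j ω * (V (j + 1) ω ^ 2 - V j ω ^ 2) ∂μ) := by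
    intro j
    set χ : Ω → ℝ := fun ω => if |S j ω| ≤ l then S j ω else 0 with hχ
    have χm : Measurable[ℱ j] χ := @chi_meas Ω (ℱ j) l (S j) (Sm j)
    have χb : ∀ ω, |χ ω| ≤ l := fun ω => by
      simp only [hχ]; split_ifs with hc
      · exact hc
      · simpa using hl.le
    have Wb : ∀ ω, |χ ω * K j ω| ≤ l * (ε + b * g j ω) := fun ω => by
      rw [abs_mul]
      exact mul_le_mul (χb ω) (Kb j ω) (abs_nonneg _) hl.le
    have Wm : Measurable[ℱ j] (fun ω => l * (ε + b * g j ω) - χ ω * K j ω) :=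
      (((gm j).const_mul b).const_add ε |>.const_mul l).sub (χm.mul (Km j))
    have Wb2 : ∀ ω, l * (ε + b * g j ω) - χ ω * K j ω ≤ 2 * (l * (ε + b)) := fun ω => by
      have h1 := (abs_le.1 (Wb ω)).1
      have h2 := (g01 j ω).2
      have h3 : l * (b * g j ω) ≤ l * b :=
        mul_le_mul_of_nonneg_left (by nlinarith) hl.le
      nlinarith
    have Wnn : ∀ ω, 0 ≤ l * (ε + b * g j ω) - χ ω * K j ω := fun ω => by
      linarith [(abs_le.1 (Wb ω)).2]
    have s1 := h.sub j _ Wm Wnn _ Wb2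
    have Zm : Measurable[ℱ j] (fun ω => 2 * ε ^ 2 + 2 * b ^ 2 * g j ω) :=
      ((gm j).const_mul _).const_add _
    have s2 := h.sq j _ Zm (fun ω => by have := (g01 j ω).1; positivity)
      (2 * ε ^ 2 + 2 * b ^ 2) (fun ω => by nlinarith [(g01 j ω).2, sq_nonneg b])
    have j1 : Integrable (fun ω => (l * (ε + b * g j ω) - χ ω * K j ω)
        * (V (j + 1) ω - V j ω)) μ :=
      ibm (i1 j) (Wm.mono (ℱ.le j) le_rfl) _ (fun ω => by
        rw [abs_of_nonneg (Wnn ω)]; exact Wb2 ω)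
    have Zb : ∀ ω, |2 * ε ^ 2 + 2 * b ^ 2 * g j ω| ≤ 2 * ε ^ 2 + 2 * b ^ 2 := fun ω => by
      rw [abs_of_nonneg (by have := (g01 j ω).1; positivity)]
      nlinarith [(g01 j ω).2, sq_nonneg b]
    have j2 : Integrable (fun ω => (2 * ε ^ 2 + 2 * b ^ 2 * g j ω)
        * (V (j + 1) ω - V j ω) ^ 2) μ := by
      refine ibm (bint (((h.meas' (j+1)).sub (h.meas' j)).pow_const 2) (b ^ 2) (fun ω => ?_))
        (Zm.mono (ℱ.le j) le_rfl) _ Zb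
      rw [abs_pow]
      exact pow_le_pow_left₀ (abs_nonneg _) (dV j ω) 2
    have pw : ∀ ω, S (j + 1) ω ^ 2 ≤ S j ω ^ 2 + 2 * l * ε * (V (j + 1) ω - V j ω)
        + 2 * l * b * (g j ω * (V (j + 1) ω - V j ω))
        - 2 * ((l * (ε + b * g j ω) - χ ω * K j ω) * (V (j + 1) ω - V j ω))
        + (2 * ε ^ 2 + 2 * b ^ 2 * g j ω) * (V (j + 1) ω - V j ω) ^ 2 := by
      intro ω
      have hK2 : K j ω ^ 2 ≤ 2 * ε ^ 2 + 2 * b ^ 2 * g j ω := by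
        have h1 := Kb j ω
        have h2 : |K j ω| ^ 2 ≤ (ε + b * g j ω) ^ 2 := pow_le_pow_left₀ (abs_nonneg _) h1 2
        rw [sq_abs] at h2
        have h3 := gsq j ω
        have h4 : (ε + b * g j ω) ^ 2 ≤ 2 * ε ^ 2 + 2 * b ^ 2 * g j ω ^ 2 := by
          nlinarith [sq_nonneg (ε - b * g j ω)]
        rw [h3] at h4
        exact h2.trans h4
      have e1 : S (j + 1) ω = S j ω + if |S j ω| ≤ l then D j ω else 0 := rfl
      rw [e1]
      simp only [hχ]
      split_ifs with hc
      · simp only [hD]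
        nlinarith [mul_le_mul_of_nonneg_right hK2 (sq_nonneg (V (j + 1) ω - V j ω))]
      · have : 0 ≤ (2 * ε ^ 2 + 2 * b ^ 2 * g j ω) * (V (j + 1) ω - V j ω) ^ 2 :=
          mul_nonneg ((sq_nonneg _).trans hK2) (sq_nonneg _)
        nlinarith
    have k1 : Integrable (fun ω => S j ω ^ 2 + 2 * l * ε * (V (j + 1) ω - V j ω)) μ :=
      (iS j).add ((i1 j).const_mul _)
    have k2 : Integrable (fun ω => S j ω ^ 2 + 2 * l * ε * (V (j + 1) ω - V j ω)
        + 2 * l * b * (g j ω * (V (j + 1) ω - V j ω))) μ := k1.add ((i3 j).const_mul _)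
    have k3 : Integrable (fun ω => S j ω ^ 2 + 2 * l * ε * (V (j + 1) ω - V j ω)
        + 2 * l * b * (g j ω * (V (j + 1) ω - V j ω))
        - 2 * ((l * (ε + b * g j ω) - χ ω * K j ω) * (V (j + 1) ω - V j ω))) μ :=
      k2.sub (j1.const_mul _)
    have m1 := integral_mono (iS (j+1)) (k3.add j2) pw
    have m2 : ∫ ω, (S j ω ^ 2 + 2 * l * ε * (V (j + 1) ω - V j ω)
        + 2 * l * b * (g j ω * (V (j + 1) ω - V j ω))
        - 2 * ((l * (ε + b * g j ω) - χ ω * K j ω) * (V (j + 1) ω - V j ω))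
        + (2 * ε ^ 2 + 2 * b ^ 2 * g j ω) * (V (j + 1) ω - V j ω) ^ 2) ∂μ
        = ∫ ω, S j ω ^ 2 ∂μ + 2 * l * ε * ∫ ω, (V (j + 1) ω - V j ω) ∂μ
          + 2 * l * b * ∫ ω, (g j ω * (V (j + 1) ω - V j ω)) ∂μ
          - 2 * ∫ ω, ((l * (ε + b * g j ω) - χ ω * K j ω) * (V (j + 1) ω - V j ω)) ∂μ
          + ∫ ω, (2 * ε ^ 2 + 2 * b ^ 2 * g j ω) * (V (j + 1) ω - V j ω) ^ 2 ∂μ := by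
      rw [integral_add k3 j2, integral_sub k2 (j1.const_mul _),
        integral_add k1 ((i3 j).const_mul _), integral_add (iS j) ((i1 j).const_mul _),
        integral_const_mul, integral_const_mul, integral_const_mul]
    have m3 : ∫ ω, (2 * ε ^ 2 + 2 * b ^ 2 * g j ω) * (V (j + 1) ω ^ 2 - V j ω ^ 2) ∂μ
        = 2 * ε ^ 2 * ∫ ω, (V (j + 1) ω ^ 2 - V j ω ^ 2) ∂μ
          + 2 * b ^ 2 * ∫ ω, g j ω * (V (j + 1) ω ^ 2 - V j ω ^ 2) ∂μ := by
      rw [← integral_const_mul, ← integral_const_mul,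
        ← integral_add ((i2 j).const_mul _) ((i4 j).const_mul _)]
      congr 1; ext ω; ring
    have m4 : ∫ ω, S (j + 1) ω ^ 2 ∂μ ≤ _ := m1.trans_eq m2
    rw [m3] at s2
    linarith
  -- summation
  have tot : ∀ J, ∫ ω, S J ω ^ 2 ∂μ ≤ 2 * l * ε * ∫ ω, (V J ω - V 0 ω) ∂μ
        + 2 * ε ^ 2 * ∫ ω, (V J ω ^ 2 - V 0 ω ^ 2) ∂μ
        + 2 * l * b * ∫ ω, ∑ j ∈ Finset.range J, g j ω * (V (j + 1) ω - V j ω) ∂μ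
        + 2 * b ^ 2 * ∫ ω, ∑ j ∈ Finset.range J, g j ω * (V (j + 1) ω ^ 2 - V j ω ^ 2) ∂μ := by
    intro J
    induction J with
    | zero => simp [hS, trS]
    | succ J ih =>
      have hst := step J
      have iV : ∀ j, Integrable (V j) μ := fun j => bint (h.meas' j) b (fun ω => by
        rw [abs_of_nonneg (h.nonneg j ω)]; exact h.le j ω)
      have iU : ∀ j, Integrable (fun ω => V j ω ^ 2) μ := fun j =>
        bint ((h.meas' j).pow_const 2) (b ^ 2) (fun ω => by
          rw [abs_of_nonneg (by positivity)]
          exact pow_le_pow_left₀ (h.nonneg j ω) (h.le j ω) 2)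
      rw [integral_finsetSum _ (fun j _ => i3 j), integral_finsetSum _ (fun j _ => i4 j),
        Finset.sum_range_succ, Finset.sum_range_succ, ← integral_finsetSum _ (fun j _ => i3 j),
        ← integral_finsetSum _ (fun j _ => i4 j)]
      rw [integral_sub (iV _) (iV _), integral_sub (iU _) (iU _)] at *
      linarith
  have hlast := tot (I * R)
  have hV1 : ∫ ω, (V (I * R) ω - V 0 ω) ∂μ ≤ b := by
    have : ∫ ω, (V (I * R) ω - V 0 ω) ∂μ ≤ ∫ ω, b ∂μ := by
      refine integral_mono (bint ((h.meas' _).sub (h.meas' 0)) b (fun ω => ?_)) (integrable_const _)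
        (fun ω => by simp only; linarith [h.nonneg 0 ω, h.le (I * R) ω])
      rw [abs_le]; constructor <;>
        linarith [h.nonneg 0 ω, h.le 0 ω, h.nonneg (I * R) ω, h.le (I * R) ω]
    simpa using this
  have hV2 : ∫ ω, (V (I * R) ω ^ 2 - V 0 ω ^ 2) ∂μ ≤ b ^ 2 := by
    have : ∫ ω, (V (I * R) ω ^ 2 - V 0 ω ^ 2) ∂μ ≤ ∫ ω, b ^ 2 ∂μ := by
      refine integral_mono (bint (((h.meas' _).pow_const 2).sub ((h.meas' 0).pow_const 2)) (b ^ 2)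
        (fun ω => ?_)) (integrable_const _)
        (fun ω => by simp only; nlinarith [h.nonneg (I * R) ω, h.le (I * R) ω])
      rw [abs_le]; constructor <;>
        nlinarith [h.nonneg 0 ω, h.le 0 ω, h.nonneg (I * R) ω, h.le (I * R) ω]
    simpa using this
  have hmk : l ^ 2 * μ.real {ω | l < |S (I * R) ω|} ≤ ∫ ω, S (I * R) ω ^ 2 ∂μ := by
    have := mul_meas_ge_le_integral_of_nonneg (μ := μ) (f := fun ω => S (I * R) ω ^ 2)
      (Eventually.of_forall (fun ω => sq_nonneg _)) (iS _) (l ^ 2)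
    refine le_trans (mul_le_mul_of_nonneg_left (measureReal_mono (fun ω hω => ?_)) (sq_nonneg l)) this
    have hω : l < |S (I * R) ω| := hω
    show l ^ 2 ≤ S (I * R) ω ^ 2
    rw [← sq_abs (S (I * R) ω)]
    exact pow_le_pow_left₀ hl.le hω.le 2
  have hsub : {ω | ∃ J ≤ I * R, l < |∑ j ∈ Finset.range J,
        H j ω * (V j ω - V (j / R * R) ω) * (V (j + 1) ω - V j ω)|} ⊆
      {ω | p ≤ nbad ε R (fun j => V j ω) I} ∪ {ω | l < |S (I * R) ω|} := by
    rintro ω ⟨J, hJ, hJl⟩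
    by_cases hp : p ≤ nbad ε R (fun j => V j ω) I
    · left; exact hp
    · right
      refine trS_spec l _ _ ⟨J, hJ, ?_⟩
      have e : ∑ j ∈ Finset.range J, D j ω = ∑ j ∈ Finset.range J,
          H j ω * (V j ω - V (j / R * R) ω) * (V (j + 1) ω - V j ω) := ?_
      · show l < |∑ j ∈ Finset.range J, D j ω|
        rw [e]; exact hJl
      refine Finset.sum_congr rfl (fun j hj => ?_)
      have hj := Finset.mem_range.1 hj
      have hRI : j / R ≤ I := by
        by_cases hR : R = 0
        · simp [hR]
        · exact (Nat.div_lt_of_lt_mul (by rw [mul_comm]; omega)).le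
      have : nbad ε R (fun j => V j ω) (j / R) < p :=
        lt_of_le_of_lt (nbad_mono ε R _ hRI) (not_le.1 hp)
      simp only [hD, hK]
      rw [if_pos this, mul_one]
  refine (measureReal_mono hsub).trans ((measureReal_union_le _ _).trans ?_)
  gcongr
  rw [le_div_iff₀ (by positivity), mul_comm]
  refine hmk.trans (hlast.trans ?_)
  have q1 : 2 * l * ε * ∫ ω, (V (I * R) ω - V 0 ω) ∂μ ≤ 2 * l * ε * b :=
    mul_le_mul_of_nonneg_left hV1 (by positivity)
  have q2 : 2 * ε ^ 2 * ∫ ω, (V (I * R) ω ^ 2 - V 0 ω ^ 2) ∂μ ≤ 2 * ε ^ 2 * b ^ 2 :=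
    mul_le_mul_of_nonneg_left hV2 (by positivity)
  linarith

end DiscretePartThree

section RealTime

/-- Bounded nonnegative submartingale on `[0,∞)`, in weighted form. -/
structure RSub {m0 : MeasurableSpace Ω} (μ : Measure Ω) (𝒻 : Filtration ℝ m0)
    (V : ℝ → Ω → ℝ) (b : ℝ) : Prop where
  meas : ∀ s, 0 ≤ s → Measurable[𝒻 s] (V s)
  nonneg : ∀ s, 0 ≤ s → ∀ ω, 0 ≤ V s ω
  le : ∀ s, 0 ≤ s → ∀ ω, V s ω ≤ b
  sub : ∀ s u, 0 ≤ s → s ≤ u → ∀ (W : Ω → ℝ), Measurable[𝒻 s] W → (∀ ω, 0 ≤ W ω) →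
    ∀ C, (∀ ω, W ω ≤ C) → 0 ≤ ∫ ω, W ω * (V u ω - V s ω) ∂μ

/-- sampled filtration -/
def gridF {m0 : MeasurableSpace Ω} (𝒻 : Filtration ℝ m0) (h : ℝ) (hh : 0 ≤ h) :
    Filtration ℕ m0 where
  seq j := 𝒻 (j * h)
  mono' i j hij := 𝒻.mono (mul_le_mul_of_nonneg_right (by exact_mod_cast hij) hh)
  le' j := 𝒻.le _

lemma RSub.grid {m0 : MeasurableSpace Ω} {μ : Measure Ω} {𝒻 : Filtration ℝ m0}
    {V : ℝ → Ω → ℝ} {b : ℝ} (hV : RSub μ 𝒻 V b) (h : ℝ) (hh : 0 ≤ h) :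
    SubW μ (gridF 𝒻 h hh) (fun j => V (j * h)) b where
  meas j := hV.meas _ (by positivity)
  nonneg j := hV.nonneg _ (by positivity)
  le j := hV.le _ (by positivity)
  sub j W hW h0 C hC := by
    have := hV.sub (j * h) ((j + 1 : ℕ) * h) (by positivity)
      (mul_le_mul_of_nonneg_right (by push_cast; linarith) hh) W hW h0 C hC
    exact this

lemma mart_zero {m0 : MeasurableSpace Ω} {μ : Measure Ω} [IsProbabilityMeasure μ]
    {𝒻 : Filtration ℝ m0} {m : ℝ → Ω → ℝ} (hm : Martingale m 𝒻 μ) {s u : ℝ} (hsu : s ≤ u)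
    (W : Ω → ℝ) (hW : Measurable[𝒻 s] W) (C : ℝ) (hC : ∀ ω, |W ω| ≤ C) :
    Integrable (fun ω => W ω * (m u ω - m s ω)) μ ∧ ∫ ω, W ω * (m u ω - m s ω) ∂μ = 0 := by
  have hWm : Measurable W := hW.mono (𝒻.le s) le_rfl
  have hi : Integrable (m u - m s) μ := (hm.integrable u).sub (hm.integrable s)
  have hWi : Integrable (W * (m u - m s)) μ :=
    hi.bdd_mul hWm.aestronglyMeasurable (Eventually.of_forall hC)
  refine ⟨hWi, ?_⟩
  have h1 : μ[W * (m u - m s) | 𝒻 s] =ᵐ[μ] W * μ[m u - m s | 𝒻 s] :=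
    condExp_mul_of_stronglyMeasurable_left hW.stronglyMeasurable hWi hi
  have h2 : μ[m u - m s | 𝒻 s] =ᵐ[μ] 0 := by
    have e1 := condExp_sub (hm.integrable u) (hm.integrable s) (𝒻 s) (μ := μ)
    have e2 := hm.2 s u hsu
    have e3 := hm.2 s s le_rfl
    filter_upwards [e1, e2, e3] with ω a b c
    rw [a, Pi.sub_apply, b, c]; simp
  have h3 : ∫ ω, (W * (m u - m s)) ω ∂μ = 0 := by
    rw [← integral_condExp (𝒻.le s)]
    rw [integral_congr_ae (h1.trans (h2.mono (fun ω hω => by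
      show W ω * _ = (0 : Ω → ℝ) ω
      rw [hω]; simp)))]
    simp
  exact h3

/-- generic construction -/
lemma RSub.of_ge {m0 : MeasurableSpace Ω} {μ : Measure Ω} [IsProbabilityMeasure μ]
    {𝒻 : Filtration ℝ m0} {m : ℝ → Ω → ℝ} (hm : Martingale m 𝒻 μ) (V c : ℝ → Ω → ℝ) (b K : ℝ)
    (hVm : ∀ s, 0 ≤ s → Measurable[𝒻 s] (V s)) (hV0 : ∀ s, 0 ≤ s → ∀ ω, 0 ≤ V s ω)
    (hVb : ∀ s, 0 ≤ s → ∀ ω, V s ω ≤ b) (hc : ∀ s, 0 ≤ s → Measurable[𝒻 s] (c s))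
    (hcK : ∀ s ω, |c s ω| ≤ K)
    (hge : ∀ s u, 0 ≤ s → s ≤ u → ∀ ω, c s ω * (m u ω - m s ω) ≤ V u ω - V s ω) :
    RSub μ 𝒻 V b where
  meas := hVm
  nonneg := hV0
  le := hVb
  sub s u hs hsu W hW hW0 C hC := by
    have h1 := mart_zero hm hsu (fun ω => W ω * c s ω) (hW.mul (hc s hs)) (C * K) (fun ω => by
      rw [abs_mul, abs_of_nonneg (hW0 ω)]
      exact mul_le_mul (hC ω) (hcK s ω) (abs_nonneg _) ((hW0 ω).trans (hC ω)))
    rw [← h1.2]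
    have hu : 0 ≤ u := hs.trans hsu
    refine integral_mono h1.1 ?_ (fun ω => ?_)
    · refine Integrable.bdd_mul (c := C) (bint (((hVm u hu).mono (𝒻.le u) le_rfl).sub
        ((hVm s hs).mono (𝒻.le s) le_rfl)) b (fun ω => ?_))
        (hW.mono (𝒻.le s) le_rfl).aestronglyMeasurable (Eventually.of_forall (fun ω => ?_))
      · rw [abs_le]; constructor <;>
          linarith [hV0 u hu ω, hV0 s hs ω, hVb u hu ω, hVb s hs ω]
      · rw [Real.norm_eq_abs, abs_of_nonneg (hW0 ω)]; exact hC ω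
    · simp only
      rw [mul_assoc]
      exact mul_le_mul_of_nonneg_left (hge s u hs hsu ω) (hW0 ω)

/-- the bounded submartingale attached to `m` -/
noncomputable def Vn (m A : ℝ → Ω → ℝ) (n : ℝ) (s : ℝ) (ω : Ω) : ℝ :=
  (if -n ≤ A 0 ω then 1 else 0) * max (n - m s ω) 0

lemma ind_meas {Ω' : Type*} [MeasurableSpace Ω'] (f g : Ω' → ℝ) (hf : Measurable f)
    (hg : Measurable g) (x y : ℝ) : Measurable fun ω => if f ω ≤ g ω then x else y :=
  Measurable.ite (measurableSet_le hf hg) measurable_const measurable_const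

lemma Vn_rsub {m0 : MeasurableSpace Ω} {μ : Measure Ω} [IsProbabilityMeasure μ]
    {𝒻 : Filtration ℝ m0} {m A : ℝ → Ω → ℝ} (hm : Martingale m 𝒻 μ) (hA : Adapted 𝒻 A)
    (hAm : ∀ ω, Monotone fun t => A t ω) (hpos : ∀ t ω, A t ω < m t ω) (n : ℝ) (hn : 0 ≤ n) :
    RSub μ 𝒻 (Vn m A n) (2 * n) := by
  have mm : ∀ s, Measurable[𝒻 s] (m s) := fun s => (hm.1 s).measurable
  have hA0 : ∀ s, 0 ≤ s → Measurable[𝒻 s] (A 0) := fun s hs => (hA 0).mono (𝒻.mono hs) le_rfl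
  have hi : ∀ s, 0 ≤ s → Measurable[𝒻 s] (fun ω => if -n ≤ A 0 ω then (1:ℝ) else 0) :=
    fun s hs => @ind_meas Ω (𝒻 s) _ _ measurable_const (hA0 s hs) 1 0
  refine RSub.of_ge hm (Vn m A n)
    (fun s ω => -((if -n ≤ A 0 ω then 1 else 0) * (if m s ω ≤ n then 1 else 0))) (2 * n) 1
    ?_ ?_ ?_ ?_ ?_ ?_
  · intro s hs
    exact (hi s hs).mul ((measurable_const.sub (mm s)).max measurable_const)
  · intro s hs ω
    unfold Vn
    split_ifs <;> simp
  · intro s hs ω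
    unfold Vn
    split_ifs with h
    · rw [one_mul]
      have := hpos s ω
      have := hAm ω hs
      simp only at this
      exact max_le (by linarith) (by linarith)
    · simp; linarith
  · intro s hs
    exact ((hi s hs).mul (@ind_meas Ω (𝒻 s) _ _ (mm s) measurable_const 1 0)).neg
  · intro s ω
    split_ifs <;> simp
  · intro s u hs hsu ω
    unfold Vn
    rcases le_total (n - m s ω) 0 with h1 | h1 <;> rcases le_total (n - m u ω) 0 with h2 | h2 <;>
      simp only [h1, h2, max_eq_left, max_eq_right] <;> split_ifs <;> linarith

lemma Gn_rsub {m0 : MeasurableSpace Ω} {μ : Measure Ω} [IsProbabilityMeasure μ]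
    {𝒻 : Filtration ℝ m0} {m A : ℝ → Ω → ℝ} (hm : Martingale m 𝒻 μ) (hA : Adapted 𝒻 A)
    (hAm : ∀ ω, Monotone fun t => A t ω) (hpos : ∀ t ω, A t ω < m t ω) (K : ℝ) (hK : 0 ≤ K) :
    RSub μ 𝒻 (fun s ω => max (1 - K * (m s ω - A s ω)) 0) 1 := by
  have mm : ∀ s, Measurable[𝒻 s] (m s) := fun s => (hm.1 s).measurable
  refine RSub.of_ge hm _
    (fun s ω => -(if K * (m s ω - A s ω) ≤ 1 then K else 0)) 1 K
    ?_ ?_ ?_ ?_ ?_ ?_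
  · intro s hs
    exact (measurable_const.sub (((mm s).sub (hA s)).const_mul K)).max measurable_const
  · intro s hs ω
    exact le_max_right _ _
  · intro s hs ω
    refine max_le ?_ zero_le_one
    have := hpos s ω
    nlinarith
  · intro s hs
    exact (@ind_meas Ω (𝒻 s) _ _ (((mm s).sub (hA s)).const_mul K) measurable_const K 0).neg
  · intro s ω
    split_ifs <;> simp [abs_of_nonneg hK, hK]
  · intro s u hs hsu ω
    have hh := hAm ω hsu
    simp only at hh
    have h3 : 0 ≤ K * (A u ω - A s ω) := mul_nonneg hK (by linarith)
    split_ifs with h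
    · rw [max_eq_left (show 0 ≤ 1 - K * (m s ω - A s ω) by linarith)]
      have := le_max_left (1 - K * (m u ω - A u ω)) 0
      linarith
    · rw [max_eq_right (show 1 - K * (m s ω - A s ω) ≤ 0 by linarith)]
      have := le_max_right (1 - K * (m u ω - A u ω)) 0
      linarith

end RealTime

section Maximal

lemma dy_succ (t : ℝ) (k j : ℕ) : ((2 * j : ℕ) : ℝ) * (t / 2 ^ (k + 1)) = j * (t / 2 ^ k) := by
  push_cast
  field_simp
  ring

lemma dy_max {m0 : MeasurableSpace Ω} {μ : Measure Ω} [IsProbabilityMeasure μ]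
    {𝒻 : Filtration ℝ m0} {f : ℝ → Ω → ℝ} {t : ℝ} (ht : 0 ≤ t) (h0 : ∀ s ω, 0 ≤ f s ω)
    (hf : ∀ k : ℕ, Submartingale (fun j : ℕ => f (j * (t / 2 ^ k)))
      (gridF 𝒻 (t / 2 ^ k) (by positivity)) μ) (l : NNReal) :
    l * μ {ω | ∃ k : ℕ, ∃ j : ℕ, j ≤ 2 ^ k ∧ (l : ℝ) ≤ f (j * (t / 2 ^ k)) ω} ≤
      ENNReal.ofReal (∫ ω, f t ω ∂μ) := by
  have e : {ω | ∃ k : ℕ, ∃ j : ℕ, j ≤ 2 ^ k ∧ (l : ℝ) ≤ f (j * (t / 2 ^ k)) ω} =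
      ⋃ k : ℕ, {ω | ∃ j : ℕ, j ≤ 2 ^ k ∧ (l : ℝ) ≤ f (j * (t / 2 ^ k)) ω} := by
    ext ω; simp
  rw [e, Monotone.measure_iUnion, ENNReal.mul_iSup]
  · refine iSup_le (fun k => ?_)
    have h1 := maximal_ineq (hf k) (fun j ω => h0 _ ω) (ε := l) (2 ^ k)
    refine le_trans (le_trans ?_ h1) ?_
    · gcongr
      rename_i ω
      rintro ⟨j, hj, hl⟩
      exact hl.trans (Finset.le_sup' (fun j : ℕ => f (j * (t / 2 ^ k)) ω)
        (Finset.mem_range.2 (by omega)))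
    · have e2 : ((2 ^ k : ℕ) : ℝ) * (t / 2 ^ k) = t := by push_cast; field_simp
      simp only [e2]
      refine ENNReal.ofReal_le_ofReal (setIntegral_le_integral ?_ (Eventually.of_forall (h0 t)))
      have := (hf k).integrable (2 ^ k)
      rwa [e2] at this
  · refine monotone_nat_of_le_succ (fun k => ?_)
    rintro ω ⟨j, hj, hl⟩
    refine ⟨2 * j, by rw [pow_succ]; omega, ?_⟩
    rw [dy_succ]; exact hl

lemma mart_grid {m0 : MeasurableSpace Ω} {μ : Measure Ω} {𝒻 : Filtration ℝ m0}
    {m : ℝ → Ω → ℝ} (hm : Martingale m 𝒻 μ) (h : ℝ) (hh : 0 ≤ h) :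
    Martingale (fun j : ℕ => m (j * h)) (gridF 𝒻 h hh) μ :=
  ⟨fun j => hm.1 _, fun i j hij => hm.2 _ _
    (mul_le_mul_of_nonneg_right (by exact_mod_cast hij) hh)⟩

lemma SubW.submart {m0 : MeasurableSpace Ω} {μ : Measure Ω} [IsProbabilityMeasure μ]
    {ℱ : Filtration ℕ m0} {V : ℕ → Ω → ℝ} {b : ℝ} (h : SubW μ ℱ V b) : Submartingale V ℱ μ := by
  have iV : ∀ j, Integrable (V j) μ := fun j => bint (h.meas' j) b (fun ω => by
        rw [abs_of_nonneg (h.nonneg j ω)]; exact h.le j ω)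
  refine submartingale_of_setIntegral_le_succ (fun j => (h.meas j).stronglyMeasurable) iV
    (fun i s hs => ?_)
  have hs' := ℱ.le i s hs
  have := h.sub i (s.indicator (fun _ => 1)) (measurable_const.indicator hs)
    (fun ω => indicator_nonneg (fun _ _ => zero_le_one) ω) 1
    (fun ω => indicator_le_self' (fun _ _ => zero_le_one) ω)
  have e : ∀ ω, s.indicator (fun _ => (1:ℝ)) ω * (V (i + 1) ω - V i ω) =
      s.indicator (fun ω => V (i+1) ω - V i ω) ω := fun ω => by
    by_cases hω : ω ∈ s <;> simp [hω]
  simp_rw [e] at this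
  rw [integral_indicator hs', integral_sub (iV _).integrableOn (iV _).integrableOn] at this
  linarith

lemma sup_ae {m0 : MeasurableSpace Ω} {μ : Measure Ω} [IsProbabilityMeasure μ]
    {𝒻 : Filtration ℝ m0} {m : ℝ → Ω → ℝ} (hm : Martingale m 𝒻 μ) {t : ℝ} (ht : 0 ≤ t) :
    ∀ᵐ ω ∂μ, ∃ n : ℕ, ∀ k : ℕ, ∀ j : ℕ, j ≤ 2 ^ k → m (j * (t / 2 ^ k)) ω ≤ n := by
  have h := fun l => dy_max (μ := μ) (𝒻 := 𝒻) (f := fun s ω => max (m s ω) 0) ht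
    (fun s ω => le_max_right _ _) (fun k => ((mart_grid hm (t / 2 ^ k) (by positivity)).submartingale).pos) l
  rw [ae_iff]
  set B := {ω | ¬ ∃ n : ℕ, ∀ k : ℕ, ∀ j : ℕ, j ≤ 2 ^ k → m (j * (t / 2 ^ k)) ω ≤ n}
  have hB : ∀ n : ℕ, ((n : NNReal) : ENNReal) * μ B ≤ ENNReal.ofReal (∫ ω, max (m t ω) 0 ∂μ) := by
    intro n
    refine le_trans ?_ (h n)
    gcongr
    intro ω hω
    simp only [B, mem_ofPred_eq] at hω
    push Not at hω
    obtain ⟨k, j, hj, hl⟩ := hω n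
    exact ⟨k, j, hj, le_max_of_le_left (by simpa using hl.le)⟩
  by_contra hne
  have hfin : ENNReal.ofReal (∫ ω, max (m t ω) 0 ∂μ) / μ B ≠ ⊤ :=
    ENNReal.div_ne_top ENNReal.ofReal_ne_top hne
  obtain ⟨n, hn⟩ := ENNReal.exists_nat_gt hfin
  have := hB n
  have h2 := ENNReal.div_lt_iff (Or.inl hne) (Or.inl (measure_ne_top μ B)) |>.1 hn
  simp only [ENNReal.coe_natCast] at this
  exact absurd (lt_of_lt_of_le h2 this) (lt_irrefl _)

lemma inf_ae {m0 : MeasurableSpace Ω} {μ : Measure Ω} [IsProbabilityMeasure μ]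
    {𝒻 : Filtration ℝ m0} {m A : ℝ → Ω → ℝ} (hm : Martingale m 𝒻 μ) (hA : Adapted 𝒻 A)
    (hAm : ∀ ω, Monotone fun t => A t ω) (hpos : ∀ t ω, A t ω < m t ω) {t : ℝ} (ht : 0 ≤ t) :
    ∀ᵐ ω ∂μ, ∃ n : ℕ, ∀ k : ℕ, ∀ j : ℕ, j ≤ 2 ^ k → ((n : ℝ) + 1)⁻¹ ≤
      m (j * (t / 2 ^ k)) ω - A (j * (t / 2 ^ k)) ω := by
  have h := fun (n : ℕ) l => dy_max (μ := μ) (𝒻 := 𝒻)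
    (f := fun s ω => max (1 - (n:ℝ) * (m s ω - A s ω)) 0) ht
    (fun s ω => le_max_right _ _)
    (fun k => ((Gn_rsub hm hA hAm hpos n (by positivity)).grid (t / 2 ^ k) (by positivity)).submart) l
  rw [ae_iff]
  set B := {ω | ¬ ∃ n : ℕ, ∀ k : ℕ, ∀ j : ℕ, j ≤ 2 ^ k → ((n : ℝ) + 1)⁻¹ ≤
      m (j * (t / 2 ^ k)) ω - A (j * (t / 2 ^ k)) ω}
  have mm : ∀ s, Measurable (m s) := fun s => (hm.1 s).measurable.mono (𝒻.le s) le_rfl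
  have Am : ∀ s, Measurable (A s) := fun s => (hA s).mono (𝒻.le s) le_rfl
  have hB : ∀ n : ℕ, (((1/2 : NNReal)) : ENNReal) * μ B ≤
      ENNReal.ofReal (∫ ω, max (1 - (n:ℝ) * (m t ω - A t ω)) 0 ∂μ) := by
    intro n
    refine le_trans ?_ (h n (1/2))
    gcongr
    intro ω hω
    simp only [B, mem_ofPred_eq] at hω
    push Not at hω
    obtain ⟨k, j, hj, hl⟩ := hω (2 * n)
    refine ⟨k, j, hj, le_max_of_le_left ?_⟩
    have h3 : (n : ℝ) * (m (j * (t / 2 ^ k)) ω - A (j * (t / 2 ^ k)) ω) ≤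
        n * (((2 * n : ℕ) : ℝ) + 1)⁻¹ := mul_le_mul_of_nonneg_left hl.le (by positivity)
    have h4 : (n : ℝ) * (((2 * n : ℕ) : ℝ) + 1)⁻¹ ≤ 1 / 2 := by
      rw [mul_inv_le_iff₀ (by positivity)]; push_cast; linarith
    norm_num
    linarith
  have hlim : Tendsto (fun n : ℕ => ∫ ω, max (1 - (n:ℝ) * (m t ω - A t ω)) 0 ∂μ) atTop (nhds 0) := by
    have := tendsto_integral_of_dominated_convergence (μ := μ)
      (F := fun (n : ℕ) ω => max (1 - (n:ℝ) * (m t ω - A t ω)) 0) (f := fun _ => 0) (fun _ => 1)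
      (fun n => ((measurable_const.sub (((mm t).sub (Am t)).const_mul (n:ℝ))).max
        measurable_const).aestronglyMeasurable)
      (integrable_const _) (fun n => Eventually.of_forall (fun ω => ?_))
      (Eventually.of_forall (fun ω => ?_))
    · simpa using this
    · rw [Real.norm_eq_abs, abs_of_nonneg (le_max_right _ _)]
      have := hpos t ω
      exact max_le (by have : 0 ≤ (n:ℝ) * (m t ω - A t ω) := mul_nonneg (by positivity) (by linarith)
                       linarith) zero_le_one
    · refine tendsto_const_nhds.congr' ?_
      have hp : 0 < m t ω - A t ω := by linarith [hpos t ω]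
      filter_upwards [eventually_ge_atTop ⌈(m t ω - A t ω)⁻¹⌉₊] with n hn
      have : (m t ω - A t ω)⁻¹ ≤ n := (Nat.le_ceil _).trans (by exact_mod_cast hn)
      rw [inv_le_iff_one_le_mul₀ hp] at this
      rw [max_eq_right (by linarith)]
  have hl2 := ENNReal.tendsto_ofReal hlim
  rw [ENNReal.ofReal_zero] at hl2
  have h5 := ge_of_tendsto' hl2 hB
  have h6 : (((1/2 : NNReal)) : ENNReal) * μ B = 0 := le_antisymm h5 zero_le
  rcases mul_eq_zero.1 h6 with h7 | h7
  · simp at h7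
  · exact h7

end Maximal

section Paths

lemma ceil_pt {h u : ℝ} (hh : 0 < h) (hu : 0 ≤ u) :
    u ≤ (⌈u / h⌉₊ : ℝ) * h ∧ (⌈u / h⌉₊ : ℝ) * h < u + h := by
  constructor
  · rw [← div_le_iff₀ hh]; exact Nat.le_ceil _
  · have := Nat.ceil_lt_add_one (a := u / h) (by positivity)
    calc (⌈u / h⌉₊ : ℝ) * h < (u / h + 1) * h := by gcongr
      _ = u + h := by field_simp

lemma ceil_tendsto {f : ℝ → ℝ} {u : ℝ} (hu : 0 ≤ u) (hf : ContinuousWithinAt f (Ici u) u)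
    {h : ℕ → ℝ} (hh : ∀ k, 0 < h k) (hl : Tendsto h atTop (nhds 0)) :
    Tendsto (fun k => f (⌈u / h k⌉₊ * h k)) atTop (nhds (f u)) := by
  refine hf.tendsto.comp (tendsto_nhdsWithin_iff.2 ⟨?_, Eventually.of_forall
    (fun k => (ceil_pt (hh k) hu).1)⟩)
  have h2 : Tendsto (fun k => u + h k) atTop (nhds u) := by simpa using hl.const_add u
  exact tendsto_of_tendsto_of_tendsto_of_le_of_le tendsto_const_nhds h2
    (fun k => (ceil_pt (hh k) hu).1) (fun k => (ceil_pt (hh k) hu).2.le)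

lemma dy_tendsto (t : ℝ) : Tendsto (fun k : ℕ => t / 2 ^ k) atTop (nhds 0) := by
  have := (tendsto_pow_atTop_nhds_zero_of_lt_one (r := (1/2 : ℝ)) (by norm_num) (by norm_num)).const_mul t
  simpa [div_eq_mul_inv] using this

lemma dy_ceil_le {t u : ℝ} (ht : 0 < t) (hut : u ≤ t) (k : ℕ) : ⌈u / (t / 2 ^ k)⌉₊ ≤ 2 ^ k := by
  refine Nat.ceil_le.2 ?_
  rw [div_le_iff₀ (by positivity)]
  push_cast; field_simp; exact hut

lemma left_lim_of_cnt {f : ℝ → ℝ} {t : ℝ} (ht : 0 < t)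
    (hf : ∀ s, ContinuousWithinAt f (Ici s) s)
    (hc : ∀ n : ℕ, ∃ p : ℕ, ∃ᶠ k : ℕ in atTop,
      (rst (1 / ((n:ℝ) + 1)) (fun j => f (j * (t / 2 ^ k))) (2 ^ k)).2 ≤ p)
    {s : ℝ} (hs : 0 < s) (hst : s ≤ t) : ∃ l, Tendsto f (nhdsWithin s (Iio s)) (nhds l) := by
  have hh : ∀ k : ℕ, 0 < t / 2 ^ k := fun k => by positivity
  refine cauchy_map_iff_exists_tendsto.1 ?_
  rw [Metric.cauchy_iff]
  refine ⟨inferInstance, fun ε0 hε0 => ?_⟩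
  by_contra hcon
  push Not at hcon
  have hosc : ∀ q, 0 ≤ q → q < s → ∃ u v, q < u ∧ u ≤ v ∧ v < s ∧ ε0 ≤ |f v - f u| := by
    intro q hq0 hqs
    have hmem : f '' Ioo q s ∈ map f (nhdsWithin s (Iio s)) :=
      image_mem_map (Ioo_mem_nhdsLT hqs)
    obtain ⟨x, ⟨u, hu, rfl⟩, y, ⟨v, hv, rfl⟩, hd⟩ := hcon _ hmem
    rcases le_total u v with h | h
    · exact ⟨u, v, hu.1, h, hv.2, by rw [dist_comm] at hd; exact hd⟩
    · exact ⟨v, u, hv.1, h, hu.2, hd⟩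
  obtain ⟨n0, hn0⟩ := exists_nat_one_div_lt (show 0 < ε0 / 4 by positivity)
  obtain ⟨p, hp⟩ := hc n0
  have hpos : 0 ≤ 1 / ((n0:ℝ) + 1) := by positivity
  set e0 := 1 / ((n0:ℝ) + 1) with he0
  have ind : ∀ p : ℕ, ∃ q, 0 ≤ q ∧ q < s ∧ ∀ᶠ k : ℕ in atTop,
      p ≤ (rst e0 (fun j => f (j * (t / 2 ^ k))) ⌈q / (t / 2 ^ k)⌉₊).2 := by
    intro p
    induction p with
    | zero => exact ⟨0, le_rfl, hs, by simp⟩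
    | succ p ih =>
      obtain ⟨q, hq0, hqs, hq⟩ := ih
      obtain ⟨u, v, hqu, huv, hvs, hd⟩ := hosc q hq0 hqs
      have hu0 : 0 ≤ u := by linarith
      refine ⟨v, by linarith, hvs, ?_⟩
      have h1 := (((ceil_tendsto (hu0.trans huv) (hf v) hh (dy_tendsto t)).sub
        (ceil_tendsto hu0 (hf u) hh (dy_tendsto t))).abs).eventually
        (lt_mem_nhds (show 2 * e0 < |f v - f u| by linarith))
      filter_upwards [hq, h1] with k hk1 hk2
      have h3 := rst_inc e0 hpos (fun j => f (j * (t / 2 ^ k)))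
        ⌈u / (t / 2 ^ k)⌉₊ ⌈v / (t / 2 ^ k)⌉₊
        (Nat.ceil_le_ceil (div_le_div_of_nonneg_right huv (hh k).le)) hk2
      have h4 := rst_cnt_mono e0 (fun j => f (j * (t / 2 ^ k)))
        (Nat.ceil_le_ceil (div_le_div_of_nonneg_right hqu.le (hh k).le))
      simp only at h4
      omega
  obtain ⟨q, hq0, hqs, hq⟩ := ind (p + 1)
  obtain ⟨k, hk1, hk2⟩ := (hp.and_eventually hq).exists
  have h4 := rst_cnt_mono e0 (fun j => f (j * (t / 2 ^ k)))
    (dy_ceil_le ht (hqs.le.trans hst) k)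
  simp only at h4
  omega

/-- the càdlàg modulus of continuity -/
lemma cadlag_mod {f : ℝ → ℝ} {t : ℝ} 
    (hf : ∀ s, ContinuousWithinAt f (Ici s) s)
    (hl : ∀ s, 0 < s → s ≤ t → ∃ l, Tendsto f (nhdsWithin s (Iio s)) (nhds l)) {η : ℝ} (hη : 0 < η) :
    ∃ δ > 0, ∀ u σ v, 0 ≤ u → u ≤ σ → σ ≤ v → v ≤ t → v - u < δ →
      |f σ - f u| ≤ η ∨ |f v - f σ| ≤ η := by
  have loc : ∀ s : Icc (0:ℝ) t, ∃ r > 0, (∀ x y, 0 ≤ x → s.1 - r < x → x < s → 0 ≤ y → s.1 - r < y → y < s →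
      |f x - f y| ≤ η) ∧ (∀ x y, s.1 ≤ x → x < s + r → s.1 ≤ y → y < s + r → |f x - f y| ≤ η) := by
    rintro ⟨s, hs0, hst⟩
    have h1 : ∃ r > 0, ∀ x y, s ≤ x → x < s + r → s ≤ y → y < s + r → |f x - f y| ≤ η := by
      have := Metric.continuousWithinAt_iff.1 (hf s) (η / 2) (by positivity)
      obtain ⟨r, hr, h⟩ := this
      refine ⟨r, hr, fun x y hx hx' hy hy' => ?_⟩
      have a := h (show x ∈ Ici s from hx) (by rw [Real.dist_eq, abs_lt]; constructor <;> linarith)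
      have b := h (show y ∈ Ici s from hy) (by rw [Real.dist_eq, abs_lt]; constructor <;> linarith)
      rw [Real.dist_eq, abs_lt] at a b
      rw [abs_le]; constructor <;> linarith
    have h2 : ∃ r > 0, ∀ x y, 0 ≤ x → s - r < x → x < s → 0 ≤ y → s - r < y → y < s → |f x - f y| ≤ η := by
      rcases eq_or_lt_of_le hs0 with h0 | h0
      · exact ⟨1, one_pos, fun x y hx _ hx' => by linarith⟩
      · obtain ⟨l, hl⟩ := hl s h0 hst
        obtain ⟨r, hr, h⟩ := Metric.tendsto_nhdsWithin_nhds.1 hl (η / 2) (by positivity)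
        refine ⟨r, hr, fun x y _ hx hx' _ hy hy' => ?_⟩
        have a := h (show x ∈ Iio s from hx') (by rw [Real.dist_eq, abs_lt]; constructor <;> linarith)
        have b := h (show y ∈ Iio s from hy') (by rw [Real.dist_eq, abs_lt]; constructor <;> linarith)
        rw [Real.dist_eq, abs_lt] at a b
        rw [abs_le]; constructor <;> linarith
    obtain ⟨r1, hr1, h1⟩ := h1
    obtain ⟨r2, hr2, h2⟩ := h2
    refine ⟨min r1 r2, lt_min hr1 hr2, ?_, ?_⟩
    · intro x y hx hx1 hx2 hy hy1 hy2
      have := min_le_right r1 r2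
      exact h2 x y hx (by linarith) hx2 hy (by linarith) hy2
    · intro x y hx1 hx2 hy1 hy2
      have := min_le_left r1 r2
      exact h1 x y hx1 (by linarith) hy1 (by linarith)
  choose r hr hr1 hr2 using loc
  obtain ⟨δ, hδ, hL⟩ := lebesgue_number_lemma_of_metric (c := fun s : Icc (0:ℝ) t => Metric.ball s.1 (r s))
    (isCompact_Icc (a := (0:ℝ)) (b := t)) (fun _ => Metric.isOpen_ball)
    (fun x hx => mem_iUnion.2 ⟨⟨x, hx⟩, Metric.mem_ball_self (hr _)⟩)
  refine ⟨δ, hδ, fun u σ v hu huσ hσv hvt hd => ?_⟩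
  obtain ⟨s, hs⟩ := hL u ⟨hu, by linarith⟩
  have key : ∀ x, u ≤ x → x ≤ v → s.1 - r s < x ∧ x < s + r s := fun x hx hx' => by
    have := hs (show x ∈ Metric.ball u δ by
      rw [Metric.mem_ball, Real.dist_eq, abs_lt]; constructor <;> linarith)
    rw [Metric.mem_ball, Real.dist_eq, abs_lt] at this
    constructor <;> linarith
  have ku := key u le_rfl (huσ.trans hσv)
  have kσ := key σ huσ hσv
  have kv := key v (huσ.trans hσv) le_rfl
  rcases lt_or_ge σ s.1 with h | h
  · left; exact hr1 s σ u (by linarith) kσ.1 h hu ku.1 (by linarith)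
  · right; exact hr2 s v σ (by linarith) kv.2 h kσ.2

lemma SubW.cnt_markov {m0 : MeasurableSpace Ω} {μ : Measure Ω} [IsProbabilityMeasure μ]
    {ℱ : Filtration ℕ m0} {V : ℕ → Ω → ℝ} {b : ℝ} (hg : SubW μ ℱ V b) (ε : ℝ) (hε : 0 < ε) (N p : ℕ)
    (hp : 0 < p) : μ.real {ω | p ≤ (rst ε (fun j => V j ω) N).2} ≤ b ^ 2 / ε ^ 2 / p := by
  have h1 := hg.cnt ε hε N
  have hme : Measurable (fun ω => (((rst ε (fun j => V j ω) N).2 : ℕ) : ℝ)) :=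
    measurable_from_top.comp (rst_meas ε V N (fun i _ => hg.meas' i)).snd
  have hi : Integrable (fun ω => (((rst ε (fun j => V j ω) N).2 : ℕ) : ℝ)) μ := by
    refine bint hme N (fun ω => ?_)
    rw [abs_of_nonneg (by positivity)]
    exact_mod_cast (rst_range ε (fun j => V j ω) b (fun j => hg.nonneg j ω) (fun j => hg.le j ω) N).2.2
  have h2 := mul_meas_ge_le_integral_of_nonneg (μ := μ)
    (Eventually.of_forall (fun ω => Nat.cast_nonneg ((rst ε (fun j => V j ω) N).2))) hi (p : ℝ)
  rw [le_div_iff₀ (by positivity), le_div_iff₀ (by positivity)]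
  simp only [Nat.cast_le] at h2
  calc μ.real {ω | p ≤ (rst ε (fun j => V j ω) N).2} * p * ε ^ 2
      = ε ^ 2 * (p * μ.real {ω | p ≤ (rst ε (fun j => V j ω) N).2}) := by ring
    _ ≤ ε ^ 2 * ∫ ω, (((rst ε (fun j => V j ω) N).2 : ℕ) : ℝ) ∂μ :=
        mul_le_mul_of_nonneg_left h2 (by positivity)
    _ ≤ b ^ 2 := h1

lemma RSub.left_lim {m0 : MeasurableSpace Ω} {μ : Measure Ω} [IsProbabilityMeasure μ]
    {𝒻 : Filtration ℝ m0} {V : ℝ → Ω → ℝ} {b : ℝ} (hV : RSub μ 𝒻 V b) {t : ℝ} (ht : 0 < t)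
    (hf : ∀ ω s, ContinuousWithinAt (fun s => V s ω) (Ici s) s) :
    ∀ᵐ ω ∂μ, ∀ s, 0 < s → s ≤ t →
      ∃ l, Tendsto (fun s => V s ω) (nhdsWithin s (Iio s)) (nhds l) := by
  set cnt : ℝ → ℕ → Ω → ℕ := fun ε k ω => (rst ε (fun j => V (j * (t / 2 ^ k)) ω) (2 ^ k)).2 with hcnt
  have hmk : ∀ ε > 0, ∀ k (p : ℕ), 0 < p → μ {ω | p ≤ cnt ε k ω} ≤ ENNReal.ofReal (b ^ 2 / ε ^ 2 / p) := by
    intro ε hε k p hp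
    rw [← ofReal_measureReal]
    exact ENNReal.ofReal_le_ofReal
      ((hV.grid (t / 2 ^ k) (by positivity)).cnt_markov ε hε (2 ^ k) p hp)
  have hae : ∀ ε > 0, ∀ᵐ ω ∂μ, ∃ p : ℕ, ∃ᶠ k : ℕ in atTop, cnt ε k ω ≤ p := by
    intro ε hε
    rw [ae_iff]
    have hp : ∀ p : ℕ, 0 < p → μ {ω | ¬ ∃ p : ℕ, ∃ᶠ k : ℕ in atTop, cnt ε k ω ≤ p}
        ≤ ENNReal.ofReal (b ^ 2 / ε ^ 2 / p) := by
      intro p hp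
      have hsub : {ω | ¬ ∃ p : ℕ, ∃ᶠ k : ℕ in atTop, cnt ε k ω ≤ p} ⊆
          ⋃ M : ℕ, ⋂ k ≥ M, {ω | p ≤ cnt ε k ω} := by
        intro ω hω
        simp only [mem_ofPred_eq] at hω
        push Not at hω
        have := hω p
        rw [eventually_atTop] at this
        obtain ⟨M, hM⟩ := this
        exact mem_iUnion.2 ⟨M, mem_iInter₂.2 (fun k hk => (hM k hk).le)⟩
      refine (measure_mono hsub).trans ?_
      rw [Monotone.measure_iUnion]
      · exact iSup_le (fun M => (measure_mono (iInter₂_subset M le_rfl)).trans (hmk ε hε M p hp))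
      · intro M N hMN
        exact iInter₂_mono' (fun k hk => ⟨k, le_trans hMN hk, subset_rfl⟩)
    have hl : Tendsto (fun p : ℕ => ENNReal.ofReal (b ^ 2 / ε ^ 2 / p)) atTop (nhds 0) := by
      have := ENNReal.tendsto_ofReal (tendsto_const_div_atTop_nhds_zero_nat (b ^ 2 / ε ^ 2))
      simpa using this
    refine le_antisymm (ge_of_tendsto hl ?_) zero_le
    filter_upwards [eventually_gt_atTop 0] with p hp0 using hp p hp0
  have hae2 : ∀ᵐ ω ∂μ, ∀ n : ℕ, ∃ p : ℕ, ∃ᶠ k : ℕ in atTop, cnt (1 / ((n:ℝ) + 1)) k ω ≤ p :=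
    ae_all_iff.2 (fun n => hae _ (by positivity))
  filter_upwards [hae2] with ω hω s hs hst
  exact left_lim_of_cnt ht (hf ω) hω hs hst

end Paths

section LemmaM

lemma cell_eq (t : ℝ) (k r i : ℕ) : ((i * 2 ^ r : ℕ) : ℝ) * (t / 2 ^ (k + r)) = i * (t / 2 ^ k) := by
  push_cast; rw [pow_add]; field_simp

lemma gb_path {f : ℝ → ℝ} {t b L : ℝ} (ht : 0 < t) (hL : 0 ≤ L)
    (hf : ∀ s, ContinuousWithinAt f (Ici s) s)
    (hl : ∀ s, 0 < s → s ≤ t → ∃ l, Tendsto f (nhdsWithin s (Iio s)) (nhds l))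
    (hb : ∀ s, 0 ≤ s → 0 ≤ f s ∧ f s ≤ b)
    (F : ℝ → ℝ) (hF : ∀ x y, 0 ≤ x → x ≤ b → 0 ≤ y → y ≤ b → |F x - F y| ≤ L * |x - y|)
    {ε : ℝ} (hε : 0 < ε) (p : ℕ) (r : ℕ → ℕ) :
    Tendsto (fun k : ℕ => ∑ j ∈ Finset.range (2 ^ k * 2 ^ r k),
        gbad ε (2 ^ r k) p (fun j => f (j * (t / 2 ^ (k + r k)))) j *
          (F (f ((j + 1 : ℕ) * (t / 2 ^ (k + r k)))) - F (f (j * (t / 2 ^ (k + r k))))))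
      atTop (nhds 0) := by
  rw [Metric.tendsto_atTop]
  intro e he
  set η := min ε (e / (2 * (L + 1) * (p + 1))) with hη
  have hη0 : 0 < η := lt_min hε (by positivity)
  obtain ⟨δ, hδ, hmod⟩ := cadlag_mod hf hl hη0
  obtain ⟨K, hK⟩ := eventually_atTop.1 ((dy_tendsto t).eventually (gt_mem_nhds hδ))
  refine ⟨K, fun k hk => ?_⟩
  have hkd := hK k hk
  have hh : 0 < t / 2 ^ (k + r k) := by positivity
  have := gsum_bound ε (2 ^ r k) p (by positivity) (fun j => f (j * (t / 2 ^ (k + r k))))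
    (fun j => F (f (j * (t / 2 ^ (k + r k))))) (L * η) (by positivity) (2 ^ k) (by
      intro i hi a ha hlt
      have hi' : (i : ℝ) + 1 ≤ 2 ^ k := by exact_mod_cast hi
      have e1 := cell_eq t k (r k) i
      have e2 := cell_eq t k (r k) (i + 1)
      have le1 : ((i * 2 ^ r k : ℕ) : ℝ) * (t / 2 ^ (k + r k)) ≤
          ((i * 2 ^ r k + a : ℕ) : ℝ) * (t / 2 ^ (k + r k)) := by gcongr; omega
      have le2 : ((i * 2 ^ r k + a : ℕ) : ℝ) * (t / 2 ^ (k + r k)) ≤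
          (((i + 1) * 2 ^ r k : ℕ) : ℝ) * (t / 2 ^ (k + r k)) := by
        gcongr; rw [add_mul, one_mul]; omega
      have htot : (((i + 1) * 2 ^ r k : ℕ) : ℝ) * (t / 2 ^ (k + r k)) ≤ t := by
        rw [e2]; push_cast
        calc ((i:ℝ) + 1) * (t / 2 ^ k) ≤ 2 ^ k * (t / 2 ^ k) := by gcongr
          _ = t := by field_simp
      have hle : (((i + 1) * 2 ^ r k : ℕ) : ℝ) * (t / 2 ^ (k + r k)) -
          ((i * 2 ^ r k : ℕ) : ℝ) * (t / 2 ^ (k + r k)) < δ := by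
        rw [e1, e2]; push_cast
        calc ((i:ℝ) + 1) * (t / 2 ^ k) - i * (t / 2 ^ k) = t / 2 ^ k := by ring
          _ < δ := hkd
      have h0 : 0 ≤ ((i * 2 ^ r k : ℕ) : ℝ) * (t / 2 ^ (k + r k)) := by positivity
      rcases hmod _ _ _ h0 le1 le2 htot hle with h | h
      · exact absurd hlt (not_lt.2 (h.trans (min_le_left _ _)))
      · refine (hF _ _ (hb _ ?_).1 (hb _ ?_).2 (hb _ ?_).1 (hb _ ?_).2).trans
          (mul_le_mul_of_nonneg_left h hL) <;> positivity)
  rw [Real.dist_eq, sub_zero]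
  refine lt_of_le_of_lt this ?_
  have h3 : L * η * p ≤ (L + 1) * (e / (2 * (L + 1) * (p + 1))) * (p + 1) := by
    have := min_le_right ε (e / (2 * (L + 1) * (p + 1)))
    gcongr <;> linarith
  have h4 : (L + 1) * (e / (2 * (L + 1) * (p + 1))) * (p + 1) = e / 2 := by field_simp
  linarith

lemma RSub.gb_lim {m0 : MeasurableSpace Ω} {μ : Measure Ω} [IsProbabilityMeasure μ]
    {𝒻 : Filtration ℝ m0} {V : ℝ → Ω → ℝ} {b L : ℝ} (hV : RSub μ 𝒻 V b) (hb : 0 ≤ b)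
    {t : ℝ} (ht : 0 < t)
    (hf : ∀ ω s, ContinuousWithinAt (fun s => V s ω) (Ici s) s) (hL : 0 ≤ L)
    (F : ℝ → ℝ) (hFm : Measurable F)
    (hF : ∀ x y, 0 ≤ x → x ≤ b → 0 ≤ y → y ≤ b → |F x - F y| ≤ L * |x - y|)
    {ε : ℝ} (hε : 0 < ε) (p : ℕ) (r : ℕ → ℕ) :
    Tendsto (fun k : ℕ => ∫ ω, ∑ j ∈ Finset.range (2 ^ k * 2 ^ r k),
        gbad ε (2 ^ r k) p (fun j => V (j * (t / 2 ^ (k + r k))) ω) j *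
          (F (V ((j + 1 : ℕ) * (t / 2 ^ (k + r k))) ω) - F (V (j * (t / 2 ^ (k + r k))) ω)) ∂μ)
      atTop (nhds 0) := by
  have hgr := fun k : ℕ => hV.grid (t / 2 ^ (k + r k)) (by positivity)
  have := tendsto_integral_of_dominated_convergence (μ := μ)
    (F := fun k ω => ∑ j ∈ Finset.range (2 ^ k * 2 ^ r k),
        gbad ε (2 ^ r k) p (fun j => V (j * (t / 2 ^ (k + r k))) ω) j *
          (F (V ((j + 1 : ℕ) * (t / 2 ^ (k + r k))) ω) - F (V (j * (t / 2 ^ (k + r k))) ω)))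
    (f := fun _ => 0) (fun _ => L * b * p) (fun k => ?_) (integrable_const _) (fun k => ?_) ?_
  · simpa using this
  · refine (Finset.measurable_fun_sum _ (fun j _ => ?_)).aestronglyMeasurable
    exact (gbad_meas ε (2 ^ r k) p (fun j => V (j * (t / 2 ^ (k + r k)))) j
      (fun i _ => (hgr k).meas' i)).mul ((hFm.comp ((hgr k).meas' (j+1))).sub
        (hFm.comp ((hgr k).meas' j)))
  · refine Eventually.of_forall (fun ω => ?_)
    refine gsum_bound ε (2 ^ r k) p (by positivity) (fun j => V (j * (t / 2 ^ (k + r k))) ω)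
      (fun j => F (V (j * (t / 2 ^ (k + r k))) ω)) (L * b) (by positivity) (2 ^ k) ?_
    intro i hi a ha _
    refine (hF _ _ ((hgr k).nonneg _ ω) ((hgr k).le _ ω) ((hgr k).nonneg _ ω)
      ((hgr k).le _ ω)).trans (mul_le_mul_of_nonneg_left ?_ hL)
    have h1 := (hgr k).nonneg ((i + 1) * 2 ^ r k) ω
    have h2 := (hgr k).le ((i + 1) * 2 ^ r k) ω
    have h3 := (hgr k).nonneg (i * 2 ^ r k + a) ω
    have h4 := (hgr k).le (i * 2 ^ r k + a) ω
    rw [abs_le]; constructor <;> linarith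
  · filter_upwards [hV.left_lim ht hf] with ω hω
    exact gb_path ht hL (hf ω) hω (fun s hs => ⟨hV.nonneg s hs ω, hV.le s hs ω⟩) F hF hε p r

lemma RSub.lemM {m0 : MeasurableSpace Ω} {μ : Measure Ω} [IsProbabilityMeasure μ]
    {𝒻 : Filtration ℝ m0} {V : ℝ → Ω → ℝ} {b : ℝ} (hV : RSub μ 𝒻 V b) (hb : 0 ≤ b)
    {t : ℝ} (ht : 0 < t)
    (hf : ∀ ω s, ContinuousWithinAt (fun s => V s ω) (Ici s) s) (r : ℕ → ℕ)
    (H : ℕ → ℕ → Ω → ℝ) (hHm : ∀ k j : ℕ, Measurable[𝒻 (j * (t / 2 ^ (k + r k)))] (H k j))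
    (hH : ∀ k j ω, |H k j ω| ≤ 1) {l : ℝ} (hl : 0 < l) :
    Tendsto (fun k : ℕ => μ.real {ω | ∃ J ≤ 2 ^ k * 2 ^ r k, l < |∑ j ∈ Finset.range J,
        H k j ω * (V (j * (t / 2 ^ (k + r k))) ω
            - V ((j / 2 ^ r k * 2 ^ r k : ℕ) * (t / 2 ^ (k + r k))) ω)
          * (V ((j + 1 : ℕ) * (t / 2 ^ (k + r k))) ω - V (j * (t / 2 ^ (k + r k))) ω)|})
      atTop (nhds 0) := by
  have hgr := fun k : ℕ => hV.grid (t / 2 ^ (k + r k)) (by positivity)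
  have hkey := fun (ε : ℝ) (hε : 0 ≤ ε) (p k : ℕ) =>
    (hgr k).key hb (H k) (hHm k) (hH k) ε l hε hl (2 ^ r k) p (2 ^ k)
  rw [Metric.tendsto_atTop]
  intro e he
  -- choose ε
  have c1 : Tendsto (fun ε : ℝ => (2 * l * (2 * ε) * b + 2 * (2 * ε) ^ 2 * b ^ 2) / l ^ 2) (nhds 0) (nhds 0) := by
    have : Continuous (fun ε : ℝ => (2 * l * (2 * ε) * b + 2 * (2 * ε) ^ 2 * b ^ 2) / l ^ 2) := by fun_prop
    simpa using this.tendsto 0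
  obtain ⟨ε, hε1, hε0⟩ := (((c1.mono_left nhdsWithin_le_nhds).eventually
    (gt_mem_nhds (show 0 < e / 3 by positivity))).and
    (self_mem_nhdsWithin (a := (0:ℝ)) (s := Ioi 0))).exists
  have hε0 : 0 < ε := hε0
  obtain ⟨p, hp1, hp0⟩ := (((tendsto_const_div_atTop_nhds_zero_nat (b ^ 2 / ε ^ 2)).eventually
    (gt_mem_nhds (show 0 < e / 3 by positivity))).and (eventually_gt_atTop 0)).exists
  have l1 := hV.gb_lim (L := 1) hb ht hf zero_le_one (fun x => x) measurable_id
    (fun x y _ _ _ _ => by simp) (show 0 < 2 * ε by positivity) p r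
  have l2 := hV.gb_lim (L := 2 * b) hb ht hf (by positivity) (fun x => x ^ 2) (by fun_prop)
    (fun x y hx hx' hy hy' => by
      have : x ^ 2 - y ^ 2 = (x + y) * (x - y) := by ring
      rw [this, abs_mul]
      refine mul_le_mul_of_nonneg_right ?_ (abs_nonneg _)
      rw [abs_of_nonneg (by linarith)]; linarith) (show 0 < 2 * ε by positivity) p r
  have l3 := ((l1.const_mul (2 * l * b)).add (l2.const_mul (2 * b ^ 2))).div_const (l ^ 2)
  simp only [mul_zero, add_zero, zero_div] at l3
  obtain ⟨K, hK⟩ := eventually_atTop.1 (l3.eventually (gt_mem_nhds (show 0 < e / 3 by positivity)))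
  refine ⟨K, fun k hk => ?_⟩
  rw [Real.dist_eq, sub_zero, abs_of_nonneg measureReal_nonneg]
  have h1 := hkey (2 * ε) (by positivity) p k
  have h2 := hK k hk
  have h3 : μ.real {ω | p ≤ nbad (2 * ε) (2 ^ r k) (fun j => V (j * (t / 2 ^ (k + r k))) ω) (2 ^ k)}
      ≤ b ^ 2 / ε ^ 2 / p := by
    refine le_trans (measureReal_mono (fun ω (hω : p ≤ _) => ?_))
      ((hgr k).cnt_markov ε hε0 (2 ^ k * 2 ^ r k) p hp0)
    exact hω.trans (nbad_le_cnt ε hε0.le _ _ _)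
  refine lt_of_le_of_lt h1 ?_
  rw [add_assoc (2 * l * (2 * ε) * b + 2 * (2 * ε) ^ 2 * b ^ 2), add_div _ _ (l ^ 2)]
  linarith

lemma mart_M {m0 : MeasurableSpace Ω} {μ : Measure Ω} [IsProbabilityMeasure μ]
    {𝒻 : Filtration ℝ m0} {m A : ℝ → Ω → ℝ} (hm : Martingale m 𝒻 μ) (hA : Adapted 𝒻 A)
    (hAm : ∀ ω, Monotone fun t => A t ω) (hpos : ∀ t ω, A t ω < m t ω)
    (hmrc : ∀ ω t, ContinuousWithinAt (fun s => m s ω) (Ici t) t)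
    {t : ℝ} (ht : 0 < t) (r : ℕ → ℕ)
    (H : ℕ → ℕ → Ω → ℝ) (hHm : ∀ k j : ℕ, Measurable[𝒻 (j * (t / 2 ^ (k + r k)))] (H k j))
    (hH : ∀ᵐ ω ∂μ, ∃ n : ℕ, ∀ k j : ℕ, j < 2 ^ k * 2 ^ r k → |H k j ω| ≤ n)
    {l : ℝ} (hl : 0 < l) :
    Tendsto (fun k : ℕ => μ.real {ω | ∃ J ≤ 2 ^ k * 2 ^ r k, l < |∑ j ∈ Finset.range J,
        H k j ω * (m (j * (t / 2 ^ (k + r k))) ω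
            - m ((j / 2 ^ r k * 2 ^ r k : ℕ) * (t / 2 ^ (k + r k))) ω)
          * (m ((j + 1 : ℕ) * (t / 2 ^ (k + r k))) ω - m (j * (t / 2 ^ (k + r k))) ω)|})
      atTop (nhds 0) := by
  set E : ℕ → Set Ω := fun n => {ω | -(n:ℝ) ≤ A 0 ω} ∩ ((⋂ k : ℕ, ⋂ j : ℕ, ⋂ (_ : j ≤ 2 ^ k),
    {ω | m (j * (t / 2 ^ k)) ω ≤ n}) ∩ (⋂ k : ℕ, ⋂ j : ℕ, ⋂ (_ : j < 2 ^ k * 2 ^ r k),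
      {ω | |H k j ω| ≤ n})) with hE
  have mm : ∀ s, Measurable (m s) := fun s => (hm.1 s).measurable.mono (𝒻.le s) le_rfl
  have Am : ∀ s, Measurable (A s) := fun s => (hA s).mono (𝒻.le s) le_rfl
  have Hm : ∀ k j, Measurable (H k j) := fun k j => (hHm k j).mono (𝒻.le _) le_rfl
  have hEm : ∀ n, MeasurableSet (E n) := fun n => by
    refine (measurableSet_le measurable_const (Am 0)).inter (MeasurableSet.inter ?_ ?_)
    · exact MeasurableSet.iInter (fun k => MeasurableSet.iInter (fun j => MeasurableSet.iInter
        (fun _ => measurableSet_le (mm _) measurable_const)))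
    · exact MeasurableSet.iInter (fun k => MeasurableSet.iInter (fun j => MeasurableSet.iInter
        (fun _ => measurableSet_le (continuous_abs.measurable.comp (Hm k j)) measurable_const)))
  have hmem : ∀ n ω, ω ∈ E n ↔ (-(n:ℝ) ≤ A 0 ω) ∧ (∀ k j : ℕ, j ≤ 2 ^ k → m (j * (t / 2 ^ k)) ω ≤ n) ∧
      (∀ k j : ℕ, j < 2 ^ k * 2 ^ r k → |H k j ω| ≤ n) := fun n ω => by
    simp only [hE, mem_inter_iff, mem_iInter, mem_ofPred_eq]
  have hanti : Antitone (fun n => (E n)ᶜ) := by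
    intro n n' hn
    refine compl_subset_compl.2 (fun ω hω => ?_)
    rw [hmem] at hω ⊢
    have hn' : (n:ℝ) ≤ n' := by exact_mod_cast hn
    exact ⟨by linarith [hω.1], fun k j hj => (hω.2.1 k j hj).trans hn',
      fun k j hj => (hω.2.2 k j hj).trans hn'⟩
  have hlim : Tendsto (fun n => μ (E n)ᶜ) atTop (nhds 0) := by
    have h1 := tendsto_measure_iInter_atTop (μ := μ)
      (fun n => (hEm n).compl.nullMeasurableSet) hanti ⟨0, measure_ne_top _ _⟩
    have h2 : μ (⋂ n, (E n)ᶜ) = 0 := by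
      have : ∀ᵐ ω ∂μ, ¬ (ω ∈ ⋂ n, (E n)ᶜ) := by
        filter_upwards [hH, sup_ae hm ht.le] with ω ⟨n1, h1⟩ ⟨n2, h2⟩ hc
        rw [mem_iInter] at hc
        refine hc (max (max n1 n2) ⌈-A 0 ω⌉₊) ?_
        rw [hmem]
        have a1 : (n1:ℝ) ≤ ((max (max n1 n2) ⌈-A 0 ω⌉₊ : ℕ) : ℝ) := by
          exact_mod_cast (le_max_left _ _).trans (le_max_left _ _)
        have a2 : (n2:ℝ) ≤ ((max (max n1 n2) ⌈-A 0 ω⌉₊ : ℕ) : ℝ) := by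
          exact_mod_cast (le_max_right _ _).trans (le_max_left _ _)
        have a3 : -A 0 ω ≤ ((max (max n1 n2) ⌈-A 0 ω⌉₊ : ℕ) : ℝ) :=
          (Nat.le_ceil _).trans (by exact_mod_cast (le_max_right _ _))
        exact ⟨by linarith, fun k j hj => (h2 k j hj).trans a2, fun k j hj => (h1 k j hj).trans a1⟩
      rw [ae_iff] at this
      simp only [not_not] at this
      exact this
    rw [h2] at h1
    exact h1
  have hlimR : Tendsto (fun n => μ.real (E n)ᶜ) atTop (nhds 0) := by
    have := (ENNReal.tendsto_toReal (show (0:ENNReal) ≠ ⊤ by simp)).comp hlim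
    rw [ENNReal.toReal_zero] at this
    exact this
  rw [Metric.tendsto_atTop]
  intro e he
  obtain ⟨n, hn1, hn0⟩ := ((hlimR.eventually (gt_mem_nhds (show 0 < e / 2 by positivity))).and
    (eventually_gt_atTop 0)).exists
  have hn0' : (0:ℝ) < n := by exact_mod_cast hn0
  have hVr := Vn_rsub hm hA hAm hpos n hn0'.le
  have hVc : ∀ ω s, ContinuousWithinAt (fun s => Vn m A n s ω) (Ici s) s := by
    intro ω s
    unfold Vn
    exact continuousWithinAt_const.mul
      ((continuousWithinAt_const.sub (hmrc ω s)).max continuousWithinAt_const)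
  have hM := hVr.lemM (by positivity) ht hVc r (fun k j ω => max (-1) (min 1 (H k j ω / n)))
    (fun k j => measurable_const.max (measurable_const.min ((hHm k j).div_const _)))
    (fun k j ω => abs_le.2 ⟨le_max_left _ _, max_le (by norm_num) (min_le_left _ _)⟩)
    (show 0 < l / n by positivity)
  obtain ⟨K, hK⟩ := eventually_atTop.1 (hM.eventually (gt_mem_nhds (show 0 < e / 2 by positivity)))
  refine ⟨K, fun k hk => ?_⟩
  rw [Real.dist_eq, sub_zero, abs_of_nonneg measureReal_nonneg]
  have hsum := add_lt_add hn1 (hK k hk)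
  rw [add_halves] at hsum
  refine lt_of_le_of_lt (le_trans ?_ (measureReal_union_le (E n)ᶜ _)) hsum
  refine measureReal_mono ?_
  rintro ω ⟨J, hJ, hJl⟩
  by_cases hω : ω ∈ E n
  swap
  · left; exact hω
  right
  refine ⟨J, hJ, ?_⟩
  rw [hmem] at hω
  have hVe : ∀ j : ℕ, j ≤ 2 ^ k * 2 ^ r k →
      Vn m A n (j * (t / 2 ^ (k + r k))) ω = n - m (j * (t / 2 ^ (k + r k))) ω := by
    intro j hj
    unfold Vn
    have := hω.2.1 (k + r k) j (by rw [pow_add]; exact hj)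
    rw [if_pos hω.1, one_mul, max_eq_left (by linarith)]
  rw [div_lt_iff₀ hn0']
  refine lt_of_lt_of_eq hJl ?_
  rw [← abs_of_pos hn0', ← abs_mul, Finset.sum_mul, abs_of_pos hn0']
  congr 1
  refine Finset.sum_congr rfl (fun j hj => ?_)
  have hj := Finset.mem_range.1 hj
  have hHb := abs_le.1 (hω.2.2 k j (by omega))
  have q1 : H k j ω / n ≤ 1 := by rw [div_le_one hn0']; exact hHb.2
  have q2 : -1 ≤ H k j ω / n := by rw [le_div_iff₀ hn0']; linarith [hHb.1]
  rw [hVe j (by omega), hVe (j + 1) (by omega),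
    hVe _ ((Nat.div_mul_le_self _ _).trans (by omega)), min_eq_right q1, max_eq_right q2]
  field_simp
  ring

end LemmaM

section Assembly

lemma real_of_meas {m0 : MeasurableSpace Ω} {μ : Measure Ω} [IsProbabilityMeasure μ] {s : ℕ → Set Ω}
    (h : Tendsto (fun k => μ.real (s k)) atTop (nhds 0)) : Tendsto (fun k => μ (s k)) atTop (nhds 0) := by
  have := ENNReal.tendsto_ofReal h
  simpa [ofReal_measureReal] using this

lemma exists_subseq_events {m0 : MeasurableSpace Ω} {μ : Measure Ω} [IsProbabilityMeasure μ]
    (B : ℕ → ℝ → Set Ω) (hanti : ∀ k l l', l ≤ l' → B k l' ⊆ B k l)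
    (hB : ∀ l > 0, Tendsto (fun k => μ (B k l)) atTop (nhds 0)) :
    ∃ φ : ℕ → ℕ, Tendsto φ atTop atTop ∧ ∀ᵐ ω ∂μ, ∀ l > 0, ∀ᶠ i in atTop, ω ∉ B (φ i) l := by
  have hex : ∀ i : ℕ, ∃ k, i ≤ k ∧ μ (B k (1 / ((i:ℝ) + 1))) ≤ (1/2 : ENNReal) ^ i := by
    intro i
    have h1 := (hB (1 / ((i:ℝ) + 1)) (by positivity)).eventually
      (gt_mem_nhds (show (0:ENNReal) < (1/2 : ENNReal) ^ i by
        refine ENNReal.pow_pos ?_ i; simp))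
    obtain ⟨k, h2, h3⟩ := (h1.and (eventually_ge_atTop i)).exists
    exact ⟨k, h3, h2.le⟩
  choose φ hφ1 hφ2 using hex
  refine ⟨φ, tendsto_atTop_mono hφ1 tendsto_id, ?_⟩
  have hs : (∑' i, μ (B (φ i) (1 / ((i:ℝ) + 1)))) ≠ ⊤ := by
    refine ne_top_of_le_ne_top ?_ (ENNReal.tsum_le_tsum hφ2)
    rw [ENNReal.tsum_geometric]
    simp
  filter_upwards [ae_eventually_notMem hs] with ω hω l hl
  obtain ⟨n, hn⟩ := exists_nat_one_div_lt hl
  filter_upwards [hω, eventually_ge_atTop n] with i hi hin hc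
  refine hi (hanti _ _ _ ?_ hc)
  refine le_trans ?_ hn.le
  have : (n:ℝ) ≤ i := by exact_mod_cast hin
  exact one_div_le_one_div_of_le (by positivity) (by linarith)

/-- uniform partitions -/
noncomputable def uniP (t : ℝ) (ht : 0 < t) (k n : ℕ) : PartitionSeq 0 (n * (t / 2 ^ k)) where
  num r := n * 2 ^ r
  pt r j := j * (t / 2 ^ (k + r))
  first r := by simp
  last r := cell_eq t k r n
  mono r i j hij := mul_le_mul_of_nonneg_right (by exact_mod_cast hij) (by positivity)
  mesh ε hε := by
    have h1 : Tendsto (fun r : ℕ => t / 2 ^ (k + r)) atTop (nhds 0) :=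
      (dy_tendsto t).comp (tendsto_atTop_mono (fun r => Nat.le_add_left r k) tendsto_id)
    filter_upwards [h1.eventually (gt_mem_nhds hε)] with r hr i hi
    push_cast
    linarith

/-- uniform partitions of `[0,t]` -/
noncomputable def uniQ (t : ℝ) (ht : 0 < t) : PartitionSeq 0 t where
  num r := 2 ^ r
  pt r j := j * (t / 2 ^ r)
  first r := by simp
  last r := by push_cast; field_simp
  mono r i j hij := mul_le_mul_of_nonneg_right (by exact_mod_cast hij) (by positivity)
  mesh ε hε := by
    filter_upwards [(dy_tendsto t).eventually (gt_mem_nhds hε)] with r hr i hi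
    push_cast
    linarith

/-- quadratic variation normalised at zero -/
noncomputable def Qh (q : ℝ → ℝ) (s : ℝ) : ℝ := if s = 0 then 0 else q s

lemma meas_of_tim {m0 : MeasurableSpace Ω} {μ : Measure Ω} {f : ℕ → Ω → ℝ} {g : Ω → ℝ}
    (h : TendstoInMeasure μ f atTop g) {l : ℝ} (hl : 0 < l) :
    Tendsto (fun k => μ {ω | l < |f k ω - g ω|}) atTop (nhds 0) := by
  have := tendstoInMeasure_iff_dist.1 h l hl
  refine tendsto_of_tendsto_of_tendsto_of_le_of_le tendsto_const_nhds this (fun _ => zero_le)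
    (fun k => measure_mono (fun ω (hω : l < |f k ω - g ω|) => ?_))
  show l ≤ dist (f k ω) (g ω)
  rw [Real.dist_eq]
  exact hω.le

lemma exists_r {m0 : MeasurableSpace Ω} {μ : Measure Ω} [IsProbabilityMeasure μ]
    {m QV : ℝ → Ω → ℝ} (hQV : IsQuadCovar μ m m QV) {t : ℝ} (ht : 0 < t) (k : ℕ) :
    ∃ r : ℕ, μ {ω | ∃ n ≤ 2 ^ k, (1/8 : ℝ) ^ k < |∑ j ∈ Finset.range (n * 2 ^ r),
      (m ((j + 1 : ℕ) * (t / 2 ^ (k + r))) ω - m (j * (t / 2 ^ (k + r))) ω) ^ 2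
        - Qh (fun s => QV s ω) (n * (t / 2 ^ k))|} ≤ (1/2 : ENNReal) ^ k := by
  have h1 : ∀ n : ℕ, Tendsto (fun r => μ {ω | (1/8 : ℝ) ^ k < |∑ j ∈ Finset.range (n * 2 ^ r),
      (m ((j + 1 : ℕ) * (t / 2 ^ (k + r))) ω - m (j * (t / 2 ^ (k + r))) ω) ^ 2
        - Qh (fun s => QV s ω) (n * (t / 2 ^ k))|}) atTop (nhds 0) := by
    intro n
    rcases Nat.eq_zero_or_pos n with rfl | hn
    · simp only [Qh]
      have : ¬ ((8:ℝ) ^ k < 0) := not_lt.2 (by positivity)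
      simp [this]
    · have hp : 0 < (n:ℝ) * (t / 2 ^ k) := by positivity
      have := meas_of_tim (hQV _ hp (uniP t ht k n)) (show 0 < (1/8:ℝ) ^ k by positivity)
      convert this using 6 with r ω
      unfold prodSum Qh
      rw [if_neg hp.ne']
      congr 2
      refine Finset.sum_congr rfl (fun j _ => ?_)
      rw [sq]; rfl
  have h2 := tendsto_finsetSum (Finset.range (2 ^ k + 1)) (fun n _ => h1 n)
  simp only [Finset.sum_const_zero] at h2
  obtain ⟨r, hr⟩ := (h2.eventually (gt_mem_nhds (show (0:ENNReal) < (1/2 : ENNReal) ^ k by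
        refine ENNReal.pow_pos ?_ k; simp))).exists
  refine ⟨r, le_trans ?_ hr.le⟩
  refine le_trans (measure_mono ?_) (measure_biUnion_finset_le _ _)
  rintro ω ⟨n, hn, hl⟩
  exact mem_biUnion (show n ∈ (Finset.range (2 ^ k + 1) : Set ℕ) by simp; omega) hl

end Assembly

section CellId

lemma cell_id (N : ℕ) (hN : 0 < N) (f g : ℕ → ℝ) (i : ℕ) :
    g i * ((f ((i + 1) * N) - f (i * N)) ^ 2
      - (∑ j ∈ Finset.range ((i + 1) * N), (f (j + 1) - f j) ^ 2
        - ∑ j ∈ Finset.range (i * N), (f (j + 1) - f j) ^ 2))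
    = 2 * (∑ j ∈ Finset.range ((i + 1) * N), g (j / N) * (f j - f (j / N * N)) * (f (j + 1) - f j)
      - ∑ j ∈ Finset.range (i * N), g (j / N) * (f j - f (j / N * N)) * (f (j + 1) - f j)) := by
  have h1 : ∀ a, a ≤ N → g i * ((f (i * N + a) - f (i * N)) ^ 2
      - (∑ j ∈ Finset.range (i * N + a), (f (j + 1) - f j) ^ 2
        - ∑ j ∈ Finset.range (i * N), (f (j + 1) - f j) ^ 2))
    = 2 * (∑ j ∈ Finset.range (i * N + a), g (j / N) * (f j - f (j / N * N)) * (f (j + 1) - f j)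
      - ∑ j ∈ Finset.range (i * N), g (j / N) * (f j - f (j / N * N)) * (f (j + 1) - f j)) := by
    intro a
    induction a with
    | zero => intro _; simp
    | succ a ih =>
      intro ha
      have h2 := ih (by omega)
      have h3 : (i * N + a) / N = i := by
        rw [mul_comm, Nat.mul_add_div hN, Nat.div_eq_of_lt (by omega)]; simp
      rw [← add_assoc, Finset.sum_range_succ, Finset.sum_range_succ, h3]
      linear_combination h2
  have := h1 N le_rfl
  rwa [show i * N + N = (i + 1) * N by ring] at this

lemma cell_bd (N : ℕ) (hN : 0 < N) (f g Q : ℕ → ℝ) (K : ℕ) {l e C : ℝ} 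
    (hQ : ∀ n ≤ K, |∑ j ∈ Finset.range (n * N), (f (j + 1) - f j) ^ 2 - Q n| ≤ e)
    (h1 : ∀ J ≤ K * N, |∑ j ∈ Finset.range J, 1 * (f j - f (j / N * N)) * (f (j + 1) - f j)| ≤ l)
    (h2 : ∀ J ≤ K * N, |∑ j ∈ Finset.range J, g (j / N) * (f j - f (j / N * N)) * (f (j + 1) - f j)| ≤ l)
    (hg : ∀ i < K, |g i| ≤ C) :
    (∀ i < K, |(f ((i + 1) * N) - f (i * N)) ^ 2 - (Q (i + 1) - Q i)| ≤ 4 * l + 2 * e) ∧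
    |∑ i ∈ Finset.range K, g i * ((f ((i + 1) * N) - f (i * N)) ^ 2 - (Q (i + 1) - Q i))|
      ≤ 2 * l + K * (C * (2 * e)) := by
  have hle : ∀ i < K, (i + 1) * N ≤ K * N := fun i hi => Nat.mul_le_mul_right _ hi
  have hle' : ∀ i < K, i * N ≤ K * N := fun i hi => Nat.mul_le_mul_right _ hi.le
  constructor
  · intro i hi
    have c := cell_id N hN f (fun _ => 1) i
    have a1 := abs_le.1 (h1 _ (hle i hi))
    have a2 := abs_le.1 (h1 _ (hle' i hi))
    have b1 := abs_le.1 (hQ _ hi)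
    have b2 := abs_le.1 (hQ _ hi.le)
    simp only [one_mul] at c a1 a2
    rw [abs_le]
    constructor <;> linarith [a1.1, a1.2, a2.1, a2.2, b1.1, b1.2, b2.1, b2.2]
  · set S : ℕ → ℝ := fun n => ∑ j ∈ Finset.range (n * N), (f (j + 1) - f j) ^ 2 with hS
    set P : ℕ → ℝ := fun i => ∑ j ∈ Finset.range (i * N), g (j / N) * (f j - f (j / N * N)) * (f (j + 1) - f j) with hP
    have e1 : ∑ i ∈ Finset.range K, g i * ((f ((i + 1) * N) - f (i * N)) ^ 2 - (Q (i + 1) - Q i))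
      = 2 * (∑ j ∈ Finset.range (K * N), g (j / N) * (f j - f (j / N * N)) * (f (j + 1) - f j))
        + ∑ i ∈ Finset.range K, g i * ((S (i + 1) - Q (i + 1)) - (S i - Q i)) := by
      have : ∀ i, g i * ((f ((i + 1) * N) - f (i * N)) ^ 2 - (Q (i + 1) - Q i)) =
        2 * (P (i + 1)
        - P i)
        + g i * ((S (i + 1) - Q (i + 1)) - (S i - Q i)) := by
        intro i
        have c := cell_id N hN f g i
        simp only [hS, hP]
        linear_combination c
      rw [Finset.sum_congr rfl (fun i _ => this i), Finset.sum_add_distrib, ← Finset.mul_sum,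
        Finset.sum_range_sub]
      simp [hP]
    rw [e1]
    refine (abs_add_le _ _).trans (add_le_add ?_ ?_)
    · rw [abs_mul, abs_two]
      exact mul_le_mul_of_nonneg_left (h2 _ le_rfl) (by norm_num)
    · refine (Finset.abs_sum_le_sum_abs _ _).trans ?_
      refine (Finset.sum_le_card_nsmul _ _ (C * (2 * e)) ?_).trans ?_
      · intro i hi
        have hi := Finset.mem_range.1 hi
        rw [abs_mul]
        refine mul_le_mul (hg i hi) ?_ (abs_nonneg _) ((abs_nonneg _).trans (hg i hi))
        have b1 := abs_le.1 (hQ _ hi)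
        have b2 := abs_le.1 (hQ _ hi.le)
        rw [abs_le]
        simp only [hS]
        constructor <;> linarith [b1.1, b1.2, b2.1, b2.2]
      · simp

end CellId

section PathReg

lemma dy_ext {f : ℝ → ℝ} {t c : ℝ} (ht : 0 < t) (hf : ∀ s, ContinuousWithinAt f (Ici s) s)
    (h : ∀ k j : ℕ, j ≤ 2 ^ k → f (j * (t / 2 ^ k)) ≤ c) : ∀ s, 0 ≤ s → s ≤ t → f s ≤ c := by
  intro s hs hst
  have := ceil_tendsto hs (hf s) (h := fun k : ℕ => t / 2 ^ k) (fun k => by positivity) (dy_tendsto t)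
  exact le_of_tendsto this (Eventually.of_forall (fun k => h k _ (dy_ceil_le ht hst k)))

lemma path_reg {m0 : MeasurableSpace Ω} {μ : Measure Ω} [IsProbabilityMeasure μ]
    {𝒻 : Filtration ℝ m0} {m A : ℝ → Ω → ℝ} (hm : Martingale m 𝒻 μ) (hA : Adapted 𝒻 A)
    (hAm : ∀ ω, Monotone fun t => A t ω) (hpos : ∀ t ω, A t ω < m t ω)
    (hmrc : ∀ ω t, ContinuousWithinAt (fun s => m s ω) (Ici t) t)
    (hArc : ∀ ω t, ContinuousWithinAt (fun s => A s ω) (Ici t) t)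
    {t : ℝ} (ht : 0 < t) :
    ∀ᵐ ω ∂μ, (∃ c > 0, ∀ s, 0 ≤ s → s ≤ t → c ≤ m s ω - A s ω) ∧
      (∃ M, ∀ s, 0 ≤ s → s ≤ t → m s ω ≤ M) ∧
      (∀ s, 0 < s → s ≤ t → ∃ l, Tendsto (fun s => m s ω) (nhdsWithin s (Iio s)) (nhds l)) := by
  have hl : ∀ n : ℕ, _ := fun n => (Vn_rsub hm hA hAm hpos (n:ℝ) (Nat.cast_nonneg n)).left_lim ht
    (fun ω s => by
      unfold Vn
      exact continuousWithinAt_const.mul ((continuousWithinAt_const.sub (hmrc ω s)).max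
        continuousWithinAt_const))
  filter_upwards [sup_ae hm ht.le, inf_ae hm hA hAm hpos ht.le, ae_all_iff.2 hl] with ω h1 h2 h3
  obtain ⟨n, hn⟩ := h1
  obtain ⟨p, hp⟩ := h2
  have hM := dy_ext (f := fun s => m s ω) ht (hmrc ω) hn
  refine ⟨⟨((p:ℝ) + 1)⁻¹, by positivity, ?_⟩, ⟨n, hM⟩, ?_⟩
  · intro s hs hst
    have := dy_ext (f := fun s => - (m s ω - A s ω)) (c := -((p:ℝ) + 1)⁻¹) ht
      (fun s => ((hmrc ω s).sub (hArc ω s)).neg) (fun k j hj => neg_le_neg (hp k j hj)) s hs hst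
    exact neg_le_neg_iff.1 this
  · intro s hs hst
    obtain ⟨q, hq⟩ := exists_nat_ge (max (n:ℝ) (- A 0 ω))
    obtain ⟨l, hl⟩ := h3 q s hs hst
    refine ⟨q - l, (hl.const_sub (q:ℝ)).congr' ?_⟩
    have : ∀ᶠ u in nhdsWithin s (Iio s), u ∈ Ioo 0 s := Ioo_mem_nhdsLT hs
    filter_upwards [this] with u hu
    have h4 := hM u hu.1.le (hu.2.le.trans hst)
    have h5 := (le_max_left _ _).trans hq
    have h6 := (le_max_right _ _).trans hq
    unfold Vn
    rw [if_pos (by linarith), max_eq_left (by linarith)]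
    ring

end PathReg

section Assembly2

lemma assemble {m0 : MeasurableSpace Ω} {μ : Measure Ω} [IsProbabilityMeasure μ]
    {𝒻 : Filtration ℝ m0} {m A QV mt I : ℝ → Ω → ℝ} (hm : Martingale m 𝒻 μ) (hA : Adapted 𝒻 A)
    (hAm : ∀ ω, Monotone fun t => A t ω) (hpos : ∀ t ω, A t ω < m t ω)
    (hmrc : ∀ ω t, ContinuousWithinAt (fun s => m s ω) (Ici t) t)
    (hQV : IsQuadCovar μ m m QV)
    (hI : IsStochInt μ (fun s ω => ((m s ω - A s ω)⁻¹) ^ 2) mt I)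
    {t : ℝ} (ht : 0 < t) :
    ∃ φ : ℕ → ℕ, Tendsto φ atTop atTop ∧ ∀ᵐ ω ∂μ,
      (∀ l > 0, ∀ᶠ k in atTop, ∀ i < 2 ^ φ k,
        |(m ((i + 1 : ℕ) * (t / 2 ^ φ k)) ω - m (i * (t / 2 ^ φ k)) ω) ^ 2
          - (Qh (fun s => QV s ω) ((i + 1 : ℕ) * (t / 2 ^ φ k))
            - Qh (fun s => QV s ω) (i * (t / 2 ^ φ k)))| ≤ l) ∧
      Tendsto (fun k => ∑ i ∈ Finset.range (2 ^ φ k),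
        ((m (i * (t / 2 ^ φ k)) ω - A (i * (t / 2 ^ φ k)) ω)⁻¹) ^ 3 *
        ((m ((i + 1 : ℕ) * (t / 2 ^ φ k)) ω - m (i * (t / 2 ^ φ k)) ω) ^ 2
          - (Qh (fun s => QV s ω) ((i + 1 : ℕ) * (t / 2 ^ φ k))
            - Qh (fun s => QV s ω) (i * (t / 2 ^ φ k))))) atTop (nhds 0) ∧
      Tendsto (fun k => ∑ i ∈ Finset.range (2 ^ φ k),
        (m ((i + 1 : ℕ) * (t / 2 ^ φ k)) ω - m (i * (t / 2 ^ φ k)) ω) ^ 2) atTop (nhds (QV t ω)) ∧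
      Tendsto (fun k => ∑ i ∈ Finset.range (2 ^ φ k),
        ((m (i * (t / 2 ^ φ k)) ω - A (i * (t / 2 ^ φ k)) ω)⁻¹) ^ 2 *
        (mt ((i + 1 : ℕ) * (t / 2 ^ φ k)) ω - mt (i * (t / 2 ^ φ k)) ω)) atTop (nhds (I t ω)) := by
  choose r hr using exists_r hQV ht
  have hc : ∀ k j : ℕ, ((j / 2 ^ r k * 2 ^ r k : ℕ) : ℝ) * (t / 2 ^ (k + r k)) ≤ j * (t / 2 ^ (k + r k)) := by
    intro k j
    refine mul_le_mul_of_nonneg_right ?_ (by positivity)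
    exact_mod_cast Nat.div_mul_le_self _ _
  set g : ℕ → ℕ → Ω → ℝ := fun k i ω => ((m (i * (t / 2 ^ k)) ω - A (i * (t / 2 ^ k)) ω)⁻¹) ^ 3 with hg
  have hinf := inf_ae hm hA hAm hpos ht.le
  have M1 := fun l (hl : 0 < l) => real_of_meas (mart_M hm hA hAm hpos hmrc ht r (fun _ _ _ => 1)
    (fun k j => measurable_const) (Eventually.of_forall (fun ω => ⟨1, fun k j _ => by simp⟩)) hl)
  have M2 := fun l (hl : 0 < l) => real_of_meas (mart_M hm hA hAm hpos hmrc ht r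
    (fun k j => g k (j / 2 ^ r k)) (fun k j => by
      have e := cell_eq t k (r k) (j / 2 ^ r k)
      have hle := hc k j
      rw [e] at hle
      simp only [hg]
      have a1 := (hm.1 ((j / 2 ^ r k : ℕ) * (t / 2 ^ k))).measurable.mono (𝒻.mono hle) le_rfl
      have a2 := (hA ((j / 2 ^ r k : ℕ) * (t / 2 ^ k))).mono (𝒻.mono hle) le_rfl
      exact ((a1.sub a2).inv).pow_const 3) (by
      filter_upwards [hinf] with ω ⟨n, hn⟩
      refine ⟨(n + 1) ^ 3, fun k j hj => ?_⟩
      have := hn k (j / 2 ^ r k) (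
        Nat.div_le_of_le_mul (by rw [mul_comm]; exact hj.le))
      simp only [hg]
      have hp : (0:ℝ) < ((n:ℝ) + 1)⁻¹ := by positivity
      rw [abs_of_nonneg (by
        have := hp.trans_le this
        positivity)]
      push_cast
      refine pow_le_pow_left₀ (inv_nonneg.2 (hp.trans_le this).le) ?_ 3
      rw [inv_le_comm₀ (hp.trans_le this) (by positivity)]
      exact this) hl)
  have M4 := fun l (hl : 0 < l) => meas_of_tim (hQV t ht (uniQ t ht)) hl
  have M5 := fun l (hl : 0 < l) => meas_of_tim (hI t ht (uniQ t ht)) hl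
  set B1 : ℕ → ℝ → Set Ω := fun k l => {ω | ∃ J ≤ 2 ^ k * 2 ^ r k, l < |∑ j ∈ Finset.range J,
        1 * (m (j * (t / 2 ^ (k + r k))) ω
            - m ((j / 2 ^ r k * 2 ^ r k : ℕ) * (t / 2 ^ (k + r k))) ω)
          * (m ((j + 1 : ℕ) * (t / 2 ^ (k + r k))) ω - m (j * (t / 2 ^ (k + r k))) ω)|} with hB1
  set B2 : ℕ → ℝ → Set Ω := fun k l => {ω | ∃ J ≤ 2 ^ k * 2 ^ r k, l < |∑ j ∈ Finset.range J,
        g k (j / 2 ^ r k) ω * (m (j * (t / 2 ^ (k + r k))) ω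
            - m ((j / 2 ^ r k * 2 ^ r k : ℕ) * (t / 2 ^ (k + r k))) ω)
          * (m ((j + 1 : ℕ) * (t / 2 ^ (k + r k))) ω - m (j * (t / 2 ^ (k + r k))) ω)|} with hB2
  set B3 : ℕ → Set Ω := fun k => {ω | ∃ n ≤ 2 ^ k, (1/8 : ℝ) ^ k < |∑ j ∈ Finset.range (n * 2 ^ r k),
      (m ((j + 1 : ℕ) * (t / 2 ^ (k + r k))) ω - m (j * (t / 2 ^ (k + r k))) ω) ^ 2
        - Qh (fun s => QV s ω) (n * (t / 2 ^ k))|} with hB3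
  set B4 : ℕ → ℝ → Set Ω := fun k l => {ω | l < |prodSum (uniQ t ht) (fun s => m s ω) (fun s => m s ω) k
    - QV t ω|} with hB4
  set B5 : ℕ → ℝ → Set Ω := fun k l => {ω | l < |leftSum (uniQ t ht) (fun s => ((m s ω - A s ω)⁻¹) ^ 2)
    (fun s => mt s ω) k - I t ω|} with hB5
  have T3 : Tendsto (fun k => μ (B3 k)) atTop (nhds 0) :=
    tendsto_of_tendsto_of_tendsto_of_le_of_le tendsto_const_nhds
      (ENNReal.tendsto_pow_atTop_nhds_zero_of_lt_one (by simp : (1/2 : ENNReal) < 1))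
      (fun _ => zero_le) hr
  obtain ⟨φ, hφ, hω⟩ := exists_subseq_events (μ := μ)
    (fun k l => B1 k l ∪ (B2 k l ∪ (B3 k ∪ (B4 k l ∪ B5 k l))))
    (fun k l l' hll => by
      refine union_subset_union ?_ (union_subset_union ?_ (union_subset_union subset_rfl
        (union_subset_union ?_ ?_)))
      · rintro ω ⟨J, hJ, h⟩; exact ⟨J, hJ, hll.trans_lt h⟩
      · rintro ω ⟨J, hJ, h⟩; exact ⟨J, hJ, hll.trans_lt h⟩
      · exact fun ω h => hll.trans_lt h
      · exact fun ω h => hll.trans_lt h)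
    (fun l hl => by
      have := (M1 l hl).add ((M2 l hl).add (T3.add ((M4 l hl).add (M5 l hl))))
      simp only [add_zero] at this
      refine tendsto_of_tendsto_of_tendsto_of_le_of_le tendsto_const_nhds this (fun _ => zero_le)
        (fun k => ?_)
      refine (measure_union_le _ _).trans (add_le_add le_rfl ?_)
      refine (measure_union_le _ _).trans (add_le_add le_rfl ?_)
      refine (measure_union_le _ _).trans (add_le_add le_rfl ?_)
      exact (measure_union_le _ _))
  refine ⟨φ, hφ, ?_⟩
  filter_upwards [hω, hinf] with ω h ⟨p, hp⟩
  set C : ℝ := ((p:ℝ) + 1) ^ 3 with hC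
  have main : ∀ k l, ω ∉ B1 k l → ω ∉ B2 k l → ω ∉ B3 k →
      (∀ i < 2 ^ k, |(m ((i + 1 : ℕ) * (t / 2 ^ k)) ω - m (i * (t / 2 ^ k)) ω) ^ 2
          - (Qh (fun s => QV s ω) ((i + 1 : ℕ) * (t / 2 ^ k))
            - Qh (fun s => QV s ω) (i * (t / 2 ^ k)))| ≤ 4 * l + 2 * (1/8) ^ k) ∧
      |∑ i ∈ Finset.range (2 ^ k), g k i ω * ((m ((i + 1 : ℕ) * (t / 2 ^ k)) ω - m (i * (t / 2 ^ k)) ω) ^ 2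
          - (Qh (fun s => QV s ω) ((i + 1 : ℕ) * (t / 2 ^ k))
            - Qh (fun s => QV s ω) (i * (t / 2 ^ k))))| ≤ 2 * l + (2 ^ k : ℕ) * (C * (2 * (1/8) ^ k)) := by
    intro k l n1 n2 n3
    simp only [hB1, hB2, hB3, mem_ofPred_eq, not_exists, not_and, not_lt] at n1 n2 n3
    have := cell_bd (2 ^ r k) (by positivity) (fun j => m (j * (t / 2 ^ (k + r k))) ω) (fun i => g k i ω)
      (fun n => Qh (fun s => QV s ω) (n * (t / 2 ^ k))) (2 ^ k) (l := l) (C := C) n3 n1 n2 (by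
        intro i hi
        simp only [hg]
        have := hp k i hi.le
        have hp : (0:ℝ) < ((p:ℝ) + 1)⁻¹ := by positivity
        rw [abs_of_nonneg (by
          have := hp.trans_le this
          positivity)]
        refine pow_le_pow_left₀ (inv_nonneg.2 (hp.trans_le this).le) ?_ 3
        rw [inv_le_comm₀ (hp.trans_le this) (by positivity)]
        exact this)
    simpa only [cell_eq] using this
  have hex : ∀ l > 0, ∀ᶠ k in atTop, ω ∉ B1 (φ k) l ∧ ω ∉ B2 (φ k) l ∧ ω ∉ B3 (φ k) ∧ ω ∉ B4 (φ k) l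
      ∧ ω ∉ B5 (φ k) l := by
    intro l hl
    filter_upwards [h l hl] with k hk
    simpa only [mem_union, not_or] using hk
  have t8 : Tendsto (fun k : ℕ => 2 * (1/8 : ℝ) ^ k) atTop (nhds 0) := by
    simpa using (tendsto_pow_atTop_nhds_zero_of_lt_one (by norm_num : (0:ℝ) ≤ 1/8) (by norm_num)).const_mul 2
  have t4 : Tendsto (fun k : ℕ => ((2 ^ k : ℕ) : ℝ) * (C * (2 * (1/8 : ℝ) ^ k))) atTop (nhds 0) := by
    have := (tendsto_pow_atTop_nhds_zero_of_lt_one (by norm_num : (0:ℝ) ≤ 1/4) (by norm_num)).const_mul (C * 2)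
    rw [mul_zero] at this
    refine this.congr (fun k => ?_)
    push_cast
    have : (1/4:ℝ) ^ k = 2 ^ k * (1/8) ^ k := by rw [← mul_pow]; norm_num
    rw [this]; ring
  refine ⟨?_, ?_, ?_, ?_⟩
  · intro l hl
    filter_upwards [hex (l / 8) (by positivity), (t8.comp hφ).eventually (gt_mem_nhds (half_pos hl))] with k ⟨n1, n2, n3, _⟩ h8 i hi
    have := (main _ _ n1 n2 n3).1 i hi
    simp only [Function.comp] at h8
    linarith
  · rw [Metric.tendsto_nhds]
    intro l hl
    filter_upwards [hex (l / 4) (by positivity), (t4.comp hφ).eventually (gt_mem_nhds (half_pos hl))] with k ⟨n1, n2, n3, _⟩ h8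
    have := (main _ _ n1 n2 n3).2
    simp only [Function.comp] at h8
    rw [Real.dist_eq, sub_zero]
    simp only [hg] at this
    linarith
  · rw [Metric.tendsto_nhds]
    intro l hl
    filter_upwards [hex (l / 2) (by positivity)] with k ⟨_, _, _, n4, _⟩
    simp only [hB4, mem_ofPred_eq, not_lt] at n4
    rw [Real.dist_eq]
    refine lt_of_le_of_lt ?_ (half_lt_self hl)
    convert n4 using 3
    unfold prodSum
    exact Finset.sum_congr rfl (fun j _ => by rw [sq]; rfl)
  · rw [Metric.tendsto_nhds]
    intro l hl
    filter_upwards [hex (l / 2) (by positivity)] with k ⟨_, _, _, _, n5⟩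
    simp only [hB5, mem_ofPred_eq, not_lt] at n5
    rw [Real.dist_eq]
    exact lt_of_le_of_lt n5 (half_lt_self hl)

end Assembly2

section Cells

/-- index of the cell of the uniform grid of mesh `h` that contains `u` -/
noncomputable def ix (h u : ℝ) : ℕ := ⌈u / h⌉₊ - 1

lemma ix_spec {h u : ℝ} (hh : 0 < h) (hu : 0 < u) :
    (ix h u : ℝ) * h < u ∧ u ≤ ((ix h u + 1 : ℕ) : ℝ) * h ∧ ix h u + 1 = ⌈u / h⌉₊ := by
  have h1 : 0 < ⌈u / h⌉₊ := Nat.ceil_pos.2 (by positivity)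
  have h2 : ix h u + 1 = ⌈u / h⌉₊ := by unfold ix; omega
  refine ⟨?_, ?_, h2⟩
  · have : (ix h u : ℝ) < u / h := Nat.lt_ceil.1 (by omega)
    rwa [lt_div_iff₀ hh] at this
  · rw [h2]; exact (ceil_pt hh hu.le).1

lemma ix_lt {h u : ℝ} (hh : 0 < h) (hu : 0 < u) {N : ℕ} (huN : u ≤ N * h) : ix h u < N := by
  have h1 := (ix_spec hh hu).1.trans_le huN
  have := lt_of_mul_lt_mul_right h1 hh.le
  exact_mod_cast this

lemma ix_eq {h u : ℝ} (hh : 0 < h) {i : ℕ} (h1 : (i:ℝ) * h < u) (h2 : u ≤ ((i + 1 : ℕ) : ℝ) * h) :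
    ix h u = i := by
  have hu : 0 < u := lt_of_le_of_lt (by positivity) h1
  have a := ix_spec hh hu
  have b1 := ix_lt hh hu h2
  have b2 := lt_of_mul_lt_mul_right (h1.trans_le a.2.1) hh.le
  have b3 : i < ix h u + 1 := by exact_mod_cast b2
  omega

lemma ix_meas (h : ℝ) : Measurable (ix h) := by
  unfold ix
  exact (measurable_from_top (f := fun n : ℕ => n - 1)).comp
    (Nat.measurable_ceil.comp (measurable_id.div_const h))

lemma step_int {ν : Measure ℝ} {h : ℝ} (hh : 0 < h) (F : ℕ → ℝ) (f : ℝ → ℝ) (N : ℕ)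
    (hf : IntegrableOn f (Ioc 0 (N * h)) ν) :
    IntegrableOn (fun u => F (ix h u) * f u) (Ioc 0 (N * h)) ν ∧
    ∫ u in Ioc 0 (N * h), F (ix h u) * f u ∂ν
      = ∑ i ∈ Finset.range N, F i * ∫ u in Ioc (i * h) ((i + 1 : ℕ) * h), f u ∂ν := by
  induction N with
  | zero => simp
  | succ N ih =>
    have e : Ioc 0 (((N + 1 : ℕ) : ℝ) * h) = Ioc 0 (N * h) ∪ Ioc (N * h) ((N + 1 : ℕ) * h) := by
      rw [Ioc_union_Ioc_eq_Ioc (by positivity)]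
      push_cast; nlinarith
    rw [e] at hf ⊢
    have h1 := hf.mono_set subset_union_left
    have h2 := hf.mono_set subset_union_right
    obtain ⟨i1, i2⟩ := ih h1
    have heq : EqOn (fun u => F N * f u) (fun u => F (ix h u) * f u) (Ioc (N * h) ((N + 1 : ℕ) * h)) := by
      intro u hu
      simp only [ix_eq hh hu.1 hu.2]
    have j1 : IntegrableOn (fun u => F (ix h u) * f u) (Ioc (N * h) ((N + 1 : ℕ) * h)) ν :=
      IntegrableOn.congr_fun (h2.const_mul (F N)) heq measurableSet_Ioc
    refine ⟨i1.union j1, ?_⟩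
    rw [setIntegral_union _ measurableSet_Ioc i1 j1, i2, Finset.sum_range_succ,
      ← setIntegral_congr_fun measurableSet_Ioc heq, integral_const_mul]
    exact Ioc_disjoint_Ioc_of_le le_rfl

lemma step_lim {ν : Measure ℝ} {N : ℕ → ℕ} {h : ℕ → ℝ} {t : ℝ} (hh : ∀ k, 0 < h k)
    (hN : ∀ k, N k * h k = t) {F : ℕ → ℕ → ℝ} {f g : ℝ → ℝ} {C : ℝ}
    (hg : IntegrableOn g (Ioc 0 t) ν) (hC : ∀ k, ∀ i < N k, |F k i| ≤ C)
    (hF : ∀ u, 0 < u → u ≤ t → Tendsto (fun k => F k (ix (h k) u)) atTop (nhds (f u))) :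
    Tendsto (fun k => ∑ i ∈ Finset.range (N k), F k i * ∫ u in Ioc (i * h k) ((i + 1 : ℕ) * h k), g u ∂ν)
      atTop (nhds (∫ u in Ioc 0 t, f u * g u ∂ν)) := by
  have e : ∀ k, ∑ i ∈ Finset.range (N k), F k i * ∫ u in Ioc (i * h k) ((i + 1 : ℕ) * h k), g u ∂ν
      = ∫ u in Ioc 0 t, F k (ix (h k) u) * g u ∂ν := by
    intro k
    have := (step_int (ν := ν) (hh k) (F k) g (N k) (by rwa [hN k])).2
    rw [hN k] at this
    exact this.symm
  simp_rw [e]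
  refine tendsto_integral_of_dominated_convergence (fun u => C * |g u|) ?_ ?_ ?_ ?_
  · intro k
    have := (step_int (ν := ν) (hh k) (F k) g (N k) (by rwa [hN k])).1
    rw [hN k] at this
    exact this.aestronglyMeasurable
  · exact hg.abs.const_mul C
  · intro k
    filter_upwards [ae_restrict_mem measurableSet_Ioc] with u hu
    rw [Real.norm_eq_abs, abs_mul]
    exact mul_le_mul_of_nonneg_right (hC k _ (ix_lt (hh k) hu.1 (by rw [hN k]; exact hu.2))) (abs_nonneg _)
  · filter_upwards [ae_restrict_mem measurableSet_Ioc] with u hu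
    exact (hF u hu.1 hu.2).mul_const _

lemma step_lim_one {ν : Measure ℝ} [IsLocallyFiniteMeasure ν] {N : ℕ → ℕ} {h : ℕ → ℝ} {t : ℝ} (hh : ∀ k, 0 < h k)
    (hN : ∀ k, N k * h k = t) {F : ℕ → ℕ → ℝ} {f : ℝ → ℝ} {C : ℝ}
    (hC : ∀ k, ∀ i < N k, |F k i| ≤ C)
    (hF : ∀ u, 0 < u → u ≤ t → Tendsto (fun k => F k (ix (h k) u)) atTop (nhds (f u))) :
    Tendsto (fun k => ∑ i ∈ Finset.range (N k), F k i * ν.real (Ioc (i * h k) ((i + 1 : ℕ) * h k)))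
      atTop (nhds (∫ u in Ioc 0 t, f u ∂ν)) := by
  have := step_lim (ν := ν) (g := fun _ => 1) hh hN
    (integrableOn_const (by exact measure_Ioc_lt_top.ne)) hC hF
  simpa using this

lemma step_integrable {ν : Measure ℝ} [IsLocallyFiniteMeasure ν] {N : ℕ → ℕ} {h : ℕ → ℝ} {t : ℝ} (hh : ∀ k, 0 < h k)
    (hN : ∀ k, N k * h k = t) {F : ℕ → ℕ → ℝ} {f : ℝ → ℝ} {C : ℝ}
    (hC : ∀ k, ∀ i < N k, |F k i| ≤ C)
    (hF : ∀ u, 0 < u → u ≤ t → Tendsto (fun k => F k (ix (h k) u)) atTop (nhds (f u))) :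
    IntegrableOn f (Ioc 0 t) ν := by
  have hm : AEStronglyMeasurable f (ν.restrict (Ioc 0 t)) := by
    refine aestronglyMeasurable_of_tendsto_ae (u := atTop) (f := fun k u => F k (ix (h k) u)) ?_ ?_
    · intro k
      exact ((measurable_from_top (f := F k)).comp (ix_meas (h k))).aestronglyMeasurable
    · filter_upwards [ae_restrict_mem measurableSet_Ioc] with u hu
      exact hF u hu.1 hu.2
  have : IsFiniteMeasure (ν.restrict (Ioc 0 t)) := ⟨by simpa using measure_Ioc_lt_top⟩
  refine Integrable.of_bound hm C ?_
  filter_upwards [ae_restrict_mem measurableSet_Ioc] with u hu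
  rw [Real.norm_eq_abs]
  exact le_of_tendsto (hF u hu.1 hu.2).abs (Eventually.of_forall (fun k =>
    hC k _ (ix_lt (hh k) hu.1 (by rw [hN k]; exact hu.2))))

lemma left_pt {h : ℕ → ℝ} (hh : ∀ k, 0 < h k) (hl : Tendsto h atTop (nhds 0)) {u : ℝ} (hu : 0 < u) :
    Tendsto (fun k => (ix (h k) u : ℝ) * h k) atTop (nhdsWithin u (Iio u)) := by
  refine tendsto_nhdsWithin_iff.2 ⟨?_, Eventually.of_forall (fun k => (ix_spec (hh k) hu).1)⟩
  have : Tendsto (fun k => u - h k) atTop (nhds u) := by simpa using hl.const_sub u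
  refine tendsto_of_tendsto_of_tendsto_of_le_of_le this tendsto_const_nhds ?_
    (fun k => (ix_spec (hh k) hu).1.le)
  intro k
  have := (ix_spec (hh k) hu).2.1
  push_cast at this
  show u - h k ≤ _
  linarith

lemma right_val {h : ℕ → ℝ} (hh : ∀ k, 0 < h k) (hl : Tendsto h atTop (nhds 0)) {u : ℝ} (hu : 0 < u)
    {f : ℝ → ℝ} (hf : ContinuousWithinAt f (Ici u) u) :
    Tendsto (fun k => f ((ix (h k) u + 1 : ℕ) * h k)) atTop (nhds (f u)) := by
  refine (ceil_tendsto hu.le hf hh hl).congr (fun k => ?_)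
  rw [(ix_spec (hh k) hu).2.2]

lemma cell_mass {ν : Measure ℝ} [IsLocallyFiniteMeasure ν] {h : ℕ → ℝ} (hh : ∀ k, 0 < h k)
    (hl : Tendsto h atTop (nhds 0)) {u : ℝ} (hu : 0 < u) :
    Tendsto (fun k => ν.real (Ioc (ix (h k) u * h k) ((ix (h k) u + 1 : ℕ) * h k))) atTop
      (nhds (ν.real {u})) := by
  have hL := (tendsto_nhdsWithin_iff.1 (left_pt hh hl hu)).1
  have hR := right_val hh hl hu (f := id) continuousWithinAt_id
  simp only [id] at hR
  have key : Tendsto (fun k => ν (Ioc (ix (h k) u * h k) ((ix (h k) u + 1 : ℕ) * h k))) atTop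
      (nhds (ν {u})) := by
    refine tendsto_measure_of_tendsto_indicator atTop (fun _ => measurableSet_Ioc)
      (B := Ioc (u - 1) (u + 1)) measurableSet_Ioc measure_Ioc_lt_top.ne ?_ ?_
    · filter_upwards [hL.eventually (lt_mem_nhds (show u - 1 < u by linarith)),
        hR.eventually (gt_mem_nhds (show u < u + 1 by linarith))] with k h1 h2
      exact Ioc_subset_Ioc h1.le h2.le
    · intro x
      rcases lt_trichotomy x u with hx | hx | hx
      · filter_upwards [hL.eventually (lt_mem_nhds hx)] with k hk
        simp only [mem_Ioc, mem_singleton_iff]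
        constructor
        · intro h; linarith [h.1]
        · intro h; exact absurd h hx.ne
      · subst hx
        refine Eventually.of_forall (fun k => ?_)
        have := ix_spec (hh k) hu
        simp only [mem_Ioc, mem_singleton_iff, iff_true]
        exact ⟨this.1, this.2.1⟩
      · filter_upwards [hR.eventually (gt_mem_nhds hx)] with k hk
        simp only [mem_Ioc, mem_singleton_iff]
        constructor
        · intro h; linarith [h.2]
        · intro h; exact absurd h hx.ne'
  exact (ENNReal.tendsto_toReal (isCompact_singleton (x := u)).measure_lt_top.ne).comp key

lemma zero_mass {ν : Measure ℝ} [IsLocallyFiniteMeasure ν] {h : ℕ → ℝ} 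
    (hl : Tendsto h atTop (nhds 0)) :
    Tendsto (fun k => ν.real (Ioc 0 (h k))) atTop (nhds 0) := by
  have key : Tendsto (fun k => ν (Ioc 0 (h k))) atTop (nhds (ν ∅)) := by
    refine tendsto_measure_of_tendsto_indicator atTop (fun _ => measurableSet_Ioc)
      (B := Ioc 0 1) measurableSet_Ioc measure_Ioc_lt_top.ne ?_ ?_
    · filter_upwards [hl.eventually (gt_mem_nhds one_pos)] with k h2
      exact Ioc_subset_Ioc le_rfl h2.le
    · intro x
      rcases le_or_gt x 0 with hx | hx
      · refine Eventually.of_forall (fun k => ?_)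
        simp only [mem_Ioc, mem_empty_iff_false, iff_false]
        intro h; linarith [h.1]
      · filter_upwards [hl.eventually (gt_mem_nhds hx)] with k hk
        simp only [mem_Ioc, mem_empty_iff_false, iff_false]
        intro h; linarith [h.2]
  rw [measure_empty] at key
  exact (ENNReal.tendsto_toReal ENNReal.zero_ne_top).comp key

end Cells

section Pathwise

lemma cs_bound (N : ℕ) (x D : ℕ → ℝ) {e X Y : ℝ} (he : 0 ≤ e) (hX0 : 0 ≤ X)
    (hD : ∀ i < N, |D i| ≤ e)
    (hX : ∑ i ∈ Finset.range N, x i ^ 2 ≤ X) (hY : ∑ i ∈ Finset.range N, |D i| ≤ Y) :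
    |∑ i ∈ Finset.range N, x i * D i| ≤ √(X * (e * Y)) := by
  refine Real.abs_le_sqrt ?_
  refine (Finset.sum_mul_sq_le_sq_mul_sq _ _ _).trans ?_
  refine mul_le_mul hX ?_ (Finset.sum_nonneg (fun i _ => sq_nonneg _)) hX0
  calc ∑ i ∈ Finset.range N, D i ^ 2 ≤ ∑ i ∈ Finset.range N, e * |D i| := by
        refine Finset.sum_le_sum (fun i hi => ?_)
        rw [← sq_abs, sq]
        exact mul_le_mul_of_nonneg_right (hD i (Finset.mem_range.1 hi)) (abs_nonneg _)
    _ = e * ∑ i ∈ Finset.range N, |D i| := by rw [Finset.mul_sum]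
    _ ≤ e * Y := mul_le_mul_of_nonneg_left hY he

lemma inv_diff {x y : ℝ} (hx : 0 < x) (hy : 0 < y) : y⁻¹ - x⁻¹ = -(x⁻¹ * y⁻¹ * (y - x)) := by
  field_simp
  ring

lemma cell_alg {gi gj gt Gi Gj a d q J : ℝ} (h1 : gi = Gi⁻¹) (h2 : gj = Gj⁻¹) (h3 : gt = (Gj + a)⁻¹)
    (hi : 0 < Gi) (hj : 0 < Gj) (ha : 0 ≤ a) (hd : Gj - Gi = d - a) :
    gj - gi + gi ^ 2 * (d - J) = (gi ^ 2 + gi ^ 2 * gj * (a - 2 * d) + q * (gi ^ 2 * gj * gt)) * a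
      + gi ^ 2 * gj * (d ^ 2 - q) + (gi ^ 2 * gt * q - gi ^ 2 * J) := by
  have e1 : gj - gi = - gi ^ 2 * (d - a) + gi ^ 2 * gj * (d - a) ^ 2 := by
    rw [← hd, h1, h2]; field_simp; ring
  have e2 : gj - gt = gj * gt * a := by
    have : 0 < Gj + a := by linarith
    rw [h2, h3]; field_simp; ring
  linear_combination e1 + q * gi ^ 2 * e2

lemma pathK {t : ℝ} (ht : 0 < t) {m A Am mm mt Q : ℝ → ℝ} {I : ℝ} {νA νQ : Measure ℝ}
    [IsLocallyFiniteMeasure νA] [IsLocallyFiniteMeasure νQ]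
    {N : ℕ → ℕ} {h : ℕ → ℝ} (hh : ∀ k, 0 < h k) (hN : ∀ k, N k * h k = t)
    (hl : Tendsto h atTop (nhds 0))
    (hA : Monotone A) (hArc : ∀ s, ContinuousWithinAt A (Ici s) s)
    (hmrc : ∀ s, ContinuousWithinAt m (Ici s) s)
    (hνA : ∀ a b : ℝ, a ≤ b → νA.real (Ioc a b) = A b - A a)
    (hνQ : ∀ a b : ℝ, a ≤ b → νQ.real (Ioc a b) = Q b - Q a)
    (hAm : ∀ u, 0 < u → u ≤ t → Tendsto A (nhdsWithin u (Iio u)) (nhds (Am u)))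
    (hmm : ∀ u, 0 < u → u ≤ t → Tendsto m (nhdsWithin u (Iio u)) (nhds (mm u)))
    {c : ℝ} (hc : 0 < c) (hcG : ∀ s, 0 ≤ s → s ≤ t → c ≤ m s - A s)
    {M : ℝ} (hM : ∀ s, 0 ≤ s → s ≤ t → m s ≤ M)
    (hmt : ∀ s, 0 ≤ s → mt s = m s - ∫ u in Ioc 0 s, (m u - Am u)⁻¹ ∂νQ)
    (hd : ∀ l > 0, ∀ᶠ k in atTop, ∀ i < N k,
        |(m ((i + 1 : ℕ) * h k) - m (i * h k)) ^ 2
          - (Qh Q ((i + 1 : ℕ) * h k) - Qh Q (i * h k))| ≤ l)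
    (hs : Tendsto (fun k => ∑ i ∈ Finset.range (N k),
        ((m (i * h k) - A (i * h k))⁻¹) ^ 3 *
        ((m ((i + 1 : ℕ) * h k) - m (i * h k)) ^ 2
          - (Qh Q ((i + 1 : ℕ) * h k) - Qh Q (i * h k)))) atTop (nhds 0))
    (hq : Tendsto (fun k => ∑ i ∈ Finset.range (N k),
        (m ((i + 1 : ℕ) * h k) - m (i * h k)) ^ 2) atTop (nhds (Q t)))
    (hi : Tendsto (fun k => ∑ i ∈ Finset.range (N k),
        ((m (i * h k) - A (i * h k))⁻¹) ^ 2 *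
        (mt ((i + 1 : ℕ) * h k) - mt (i * h k))) atTop (nhds I)) :
    (m t - A t)⁻¹ = (m 0 - A 0)⁻¹ - I + ∫ s in Ioc 0 t, (m s - A s)⁻¹ * (m s - Am s)⁻¹ ∂νA := by
  have hNpos : ∀ k, 0 < N k := by
    intro k
    rcases Nat.eq_zero_or_pos (N k) with h0 | h0
    · have := hN k; rw [h0] at this; simp at this; exact absurd this ht.ne
    · exact h0
  -- normalisation at zero
  have hQ0 : Q 0 = 0 := by
    have z1 := zero_mass (ν := νQ) hl
    have z2 : Tendsto (fun k => m (h k)) atTop (nhds (m 0)) :=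
      (hmrc 0).tendsto.comp (tendsto_nhdsWithin_iff.2 ⟨hl, Eventually.of_forall (fun k => (hh k).le)⟩)
    have z3 : Tendsto (fun k => (m (h k) - m 0) ^ 2 - Q (h k)) atTop (nhds 0) := by
      rw [Metric.tendsto_nhds]
      intro l hl'
      filter_upwards [hd (l / 2) (by positivity)] with k hk
      have := hk 0 (hNpos k)
      simp only [Qh, zero_add, Nat.cast_one, one_mul, Nat.cast_zero, zero_mul, if_neg (hh k).ne', if_true,
        sub_zero] at this
      rw [Real.dist_eq, sub_zero]
      linarith
    have z4 := ((z2.sub_const (m 0)).pow 2).sub (z3.add z1)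
    simp only [sub_self, add_zero, ne_eq, OfNat.ofNat_ne_zero, not_false_eq_true, zero_pow] at z4
    have z5 : Tendsto (fun _ : ℕ => Q 0) atTop (nhds 0) := by
      refine z4.congr (fun k => ?_)
      rw [hνQ 0 (h k) (hh k).le]; ring
    exact tendsto_nhds_unique tendsto_const_nhds z5
  have hQh : ∀ s, Qh Q s = Q s := by
    intro s; unfold Qh; split_ifs with h0
    · rw [h0, hQ0]
    · rfl
  simp only [hQh] at hd hs
  -- grid facts
  have g0 : ∀ k (i : ℕ), 0 ≤ (i:ℝ) * h k := fun k i => mul_nonneg (Nat.cast_nonneg i) (hh k).le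
  have gmono : ∀ k (i j : ℕ), i ≤ j → (i:ℝ) * h k ≤ j * h k := fun k i j hij =>
    mul_le_mul_of_nonneg_right (by exact_mod_cast hij) (hh k).le
  have gt' : ∀ k (i : ℕ), i ≤ N k → (i:ℝ) * h k ≤ t := fun k i hik => by
    rw [← hN k]; exact gmono k _ _ hik
  have hQmono : Monotone Q := fun a b hab => by
    have := hνQ a b hab
    have h2 : 0 ≤ νQ.real (Ioc a b) := measureReal_nonneg
    linarith
  have pA : 0 ≤ A t - A 0 := sub_nonneg.2 (hA ht.le)
  have pQ : 0 ≤ Q t - Q 0 := sub_nonneg.2 (hQmono ht.le)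
  have mlow : ∀ s, 0 ≤ s → s ≤ t → A 0 ≤ m s := fun s h0 h1 => by
    linarith [hcG s h0 h1, hA h0]
  have pM : 0 ≤ M - A 0 := by linarith [hM 0 le_rfl ht.le, mlow 0 le_rfl ht.le]
  have pc : 0 ≤ c⁻¹ := (inv_pos.2 hc).le
  obtain ⟨K, hK⟩ : ∃ K, K = c⁻¹ + (A t - A 0) + (M - A 0) + (Q t - Q 0) := ⟨_, rfl⟩
  have K0 : 0 ≤ K := by linarith
  obtain ⟨gi, hgi⟩ : ∃ gi : ℕ → ℕ → ℝ, gi = fun k (i : ℕ) => (m (i * h k) - A (i * h k))⁻¹ := ⟨_, rfl⟩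
  obtain ⟨gj, hgj⟩ : ∃ gj : ℕ → ℕ → ℝ, gj = fun k i =>
    (m ((i + 1 : ℕ) * h k) - A ((i + 1 : ℕ) * h k))⁻¹ := ⟨_, rfl⟩
  obtain ⟨gt, hgt⟩ : ∃ gt : ℕ → ℕ → ℝ, gt = fun k i =>
    (m ((i + 1 : ℕ) * h k) - A (i * h k))⁻¹ := ⟨_, rfl⟩
  obtain ⟨a, ha⟩ : ∃ a : ℕ → ℕ → ℝ, a = fun k i => A ((i + 1 : ℕ) * h k) - A (i * h k) := ⟨_, rfl⟩
  obtain ⟨d, hdd⟩ : ∃ d : ℕ → ℕ → ℝ, d = fun k i => m ((i + 1 : ℕ) * h k) - m (i * h k) := ⟨_, rfl⟩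
  obtain ⟨q, hqq⟩ : ∃ q : ℕ → ℕ → ℝ, q = fun k i => Q ((i + 1 : ℕ) * h k) - Q (i * h k) := ⟨_, rfl⟩
  have inv_bd : ∀ x, c ≤ x → 0 ≤ x⁻¹ ∧ x⁻¹ ≤ K := fun x hx =>
    ⟨(inv_pos.2 (hc.trans_le hx)).le, by
      have : x⁻¹ ≤ c⁻¹ := inv_anti₀ hc hx
      linarith⟩
  have bgi : ∀ k, ∀ i < N k, 0 ≤ gi k i ∧ gi k i ≤ K := fun k i hik => by
    rw [hgi]; exact inv_bd _ (hcG _ (g0 k i) (gt' k i hik.le))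
  have bgj : ∀ k, ∀ i < N k, 0 ≤ gj k i ∧ gj k i ≤ K := fun k i hik => by
    rw [hgj]; exact inv_bd _ (hcG _ (g0 k (i + 1)) (gt' k (i + 1) hik))
  have ba : ∀ k, ∀ i < N k, 0 ≤ a k i ∧ a k i ≤ K := fun k i hik => by
    simp only [ha]
    have h1 := hA (gmono k i (i + 1) (by omega))
    have h2 := hA (gt' k (i + 1) hik)
    have h3 := hA (g0 k i)
    constructor <;> linarith
  have bgt : ∀ k, ∀ i < N k, 0 ≤ gt k i ∧ gt k i ≤ K := fun k i hik => by
    simp only [hgt]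
    refine inv_bd _ ?_
    have h1 := hA (gmono k i (i + 1) (by omega))
    linarith [hcG _ (g0 k (i + 1)) (gt' k (i + 1) hik)]
  have bd : ∀ k, ∀ i < N k, |d k i| ≤ K := fun k i hik => by
    simp only [hdd]
    have h1 := mlow _ (g0 k (i + 1)) (gt' k (i + 1) hik)
    have h2 := mlow _ (g0 k i) (gt' k i hik.le)
    have h3 := hM _ (g0 k (i + 1)) (gt' k (i + 1) hik)
    have h4 := hM _ (g0 k i) (gt' k i hik.le)
    rw [abs_le]
    constructor <;> linarith
  have bq : ∀ k, ∀ i < N k, 0 ≤ q k i ∧ q k i ≤ K := fun k i hik => by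
    simp only [hqq]
    have h1 := hQmono (gmono k i (i + 1) (by omega))
    have h2 := hQmono (gt' k (i + 1) hik)
    have h3 := hQmono (g0 k i)
    constructor <;> linarith
  -- pointwise limits
  have LA : ∀ u, 0 < u → u ≤ t → Tendsto (fun k => A (ix (h k) u * h k)) atTop (nhds (Am u)) :=
    fun u h0 h1 => (hAm u h0 h1).comp (left_pt hh hl h0)
  have Lm : ∀ u, 0 < u → u ≤ t → Tendsto (fun k => m (ix (h k) u * h k)) atTop (nhds (mm u)) :=
    fun u h0 h1 => (hmm u h0 h1).comp (left_pt hh hl h0)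
  have RA : ∀ u, 0 < u → Tendsto (fun k => A ((ix (h k) u + 1 : ℕ) * h k)) atTop (nhds (A u)) :=
    fun u h0 => right_val hh hl h0 (hArc u)
  have Rm : ∀ u, 0 < u → Tendsto (fun k => m ((ix (h k) u + 1 : ℕ) * h k)) atTop (nhds (m u)) :=
    fun u h0 => right_val hh hl h0 (hmrc u)
  have uN : ∀ u, 0 < u → u ≤ t → ∀ k, ix (h k) u < N k := fun u h0 h1 k =>
    ix_lt (hh k) h0 (by rw [hN k]; exact h1)
  have Gm_pos : ∀ u, 0 < u → u ≤ t → c ≤ mm u - Am u := fun u h0 h1 =>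
    ge_of_tendsto ((Lm u h0 h1).sub (LA u h0 h1)) (Eventually.of_forall (fun k =>
      hcG _ (g0 k _) (gt' k _ (uN u h0 h1 k).le)))
  have Am_le : ∀ u, 0 < u → u ≤ t → Am u ≤ A u := fun u h0 h1 =>
    le_of_tendsto (LA u h0 h1) (Eventually.of_forall (fun k => hA (ix_spec (hh k) h0).1.le))
  have Gt_pos : ∀ u, 0 < u → u ≤ t → c ≤ m u - Am u := fun u h0 h1 => by
    linarith [Am_le u h0 h1, hcG u h0.le h1]
  have lgi : ∀ u, 0 < u → u ≤ t → Tendsto (fun k => gi k (ix (h k) u)) atTop (nhds (mm u - Am u)⁻¹) := by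
    intro u h0 h1; simp only [hgi]
    exact ((Lm u h0 h1).sub (LA u h0 h1)).inv₀ (hc.trans_le (Gm_pos u h0 h1)).ne'
  have lgj : ∀ u, 0 < u → u ≤ t → Tendsto (fun k => gj k (ix (h k) u)) atTop (nhds (m u - A u)⁻¹) := by
    intro u h0 h1; simp only [hgj]
    exact ((Rm u h0).sub (RA u h0)).inv₀ (hc.trans_le (hcG u h0.le h1)).ne'
  have lgt : ∀ u, 0 < u → u ≤ t → Tendsto (fun k => gt k (ix (h k) u)) atTop (nhds (m u - Am u)⁻¹) := by
    intro u h0 h1; simp only [hgt]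
    exact ((Rm u h0).sub (LA u h0 h1)).inv₀ (hc.trans_le (Gt_pos u h0 h1)).ne'
  have la : ∀ u, 0 < u → u ≤ t → Tendsto (fun k => a k (ix (h k) u)) atTop (nhds (A u - Am u)) := by
    intro u h0 h1; simp only [ha]; exact (RA u h0).sub (LA u h0 h1)
  have ld : ∀ u, 0 < u → u ≤ t → Tendsto (fun k => d k (ix (h k) u)) atTop (nhds (m u - mm u)) := by
    intro u h0 h1; simp only [hdd]; exact (Rm u h0).sub (Lm u h0 h1)
  have lq : ∀ u, 0 < u → u ≤ t → Tendsto (fun k => q k (ix (h k) u)) atTop (nhds ((m u - mm u) ^ 2)) := by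
    intro u h0 h1
    have z : Tendsto (fun k => (d k (ix (h k) u)) ^ 2 - q k (ix (h k) u)) atTop (nhds 0) := by
      rw [Metric.tendsto_nhds]
      intro l hl'
      filter_upwards [hd (l / 2) (by positivity)] with k hk
      have := hk _ (uN u h0 h1 k)
      rw [Real.dist_eq, sub_zero, hdd, hqq]
      exact lt_of_le_of_lt this (half_lt_self hl')
    have := ((ld u h0 h1).pow 2).sub z
    simpa using this
  -- the four limits
  have mA : ∀ k (i : ℕ), νA.real (Ioc (i * h k) ((i + 1 : ℕ) * h k)) = a k i := fun k i => by
    rw [hνA _ _ (gmono k i (i + 1) (by omega)), ha]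
  have mQ : ∀ k (i : ℕ), νQ.real (Ioc (i * h k) ((i + 1 : ℕ) * h k)) = q k i := fun k i => by
    rw [hνQ _ _ (gmono k i (i + 1) (by omega)), hqq]
  have T1 := step_lim_one (ν := νA) hh hN
    (F := fun k i => gi k i ^ 2 + gi k i ^ 2 * gj k i * (a k i - 2 * d k i)
      + q k i * (gi k i ^ 2 * gj k i * gt k i))
    (C := K ^ 2 + K ^ 2 * K * (K + 2 * K) + K * (K ^ 2 * K * K)) (by
      intro k i hik
      obtain ⟨u1, u2⟩ := bgi k i hik
      obtain ⟨v1, v2⟩ := bgj k i hik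
      obtain ⟨w1, w2⟩ := bgt k i hik
      obtain ⟨a1, a2⟩ := ba k i hik
      obtain ⟨q1, q2⟩ := bq k i hik
      have d2 := bd k i hik
      have e1 : |a k i - 2 * d k i| ≤ K + 2 * K := by
        rw [abs_le] at d2 ⊢
        constructor <;> linarith [d2.1, d2.2]
      refine (abs_add_le _ _).trans (add_le_add ((abs_add_le _ _).trans (add_le_add ?_ ?_)) ?_)
      · rw [abs_of_nonneg (by positivity)]; gcongr
      · rw [abs_mul, abs_of_nonneg (by positivity : 0 ≤ gi k i ^ 2 * gj k i)]; gcongr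
      · rw [abs_of_nonneg (by positivity)]; gcongr)
    (fun u h0 h1 => (((lgi u h0 h1).pow 2).add ((((lgi u h0 h1).pow 2).mul (lgj u h0 h1)).mul
      ((la u h0 h1).sub ((ld u h0 h1).const_mul 2)))).add ((lq u h0 h1).mul
        ((((lgi u h0 h1).pow 2).mul (lgj u h0 h1)).mul (lgt u h0 h1))))
  have T3 := step_lim_one (ν := νQ) hh hN (F := fun k i => gi k i ^ 2 * gt k i) (C := K ^ 2 * K) (by
      intro k i hik
      obtain ⟨u1, u2⟩ := bgi k i hik
      obtain ⟨w1, w2⟩ := bgt k i hik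
      rw [abs_of_nonneg (by positivity)]; gcongr)
    (fun u h0 h1 => ((lgi u h0 h1).pow 2).mul (lgt u h0 h1))
  have Gint := step_integrable (ν := νQ) hh hN (F := gt) (C := K) (fun k i hik => by
      rw [abs_of_nonneg (bgt k i hik).1]; exact (bgt k i hik).2) lgt
  have T4 := step_lim (ν := νQ) hh hN (F := fun k i => gi k i ^ 2) (C := K ^ 2) Gint (by
      intro k i hik
      obtain ⟨u1, u2⟩ := bgi k i hik
      rw [abs_of_nonneg (by positivity)]; gcongr)
    (fun u h0 h1 => ((lgi u h0 h1).pow 2))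
  simp only [mA] at T1
  simp only [mQ] at T3
  -- the martingale error term
  have T2 : Tendsto (fun k => ∑ i ∈ Finset.range (N k), gi k i ^ 2 * gj k i * (d k i ^ 2 - q k i))
      atTop (nhds 0) := by
    obtain ⟨x, hx⟩ : ∃ x : ℕ → ℕ → ℝ, x = fun k i => gi k i ^ 2 * (gj k i - gi k i) := ⟨_, rfl⟩
    obtain ⟨X, hX⟩ : ∃ X, X = K ^ 8 * (2 * (Q t + 1) + 2 * K * K) := ⟨_, rfl⟩
    obtain ⟨Y, hY⟩ : ∃ Y, Y = (Q t + 1) + (Q t - Q 0) := ⟨_, rfl⟩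
    have pX : 0 ≤ X := by
      rw [hX]
      have : 0 ≤ Q t := by linarith
      positivity
    have pY : 0 ≤ Y := by rw [hY]; linarith
    have sa : ∀ k, ∑ i ∈ Finset.range (N k), a k i ≤ K := fun k => by
      have tel := Finset.sum_range_sub (fun i : ℕ => A (i * h k)) (N k)
      simp only [hN k, Nat.cast_zero, zero_mul] at tel
      simp only [ha]
      rw [tel]; linarith
    have sq' : ∀ k, ∑ i ∈ Finset.range (N k), q k i = Q t - Q 0 := fun k => by
      have tel := Finset.sum_range_sub (fun i : ℕ => Q (i * h k)) (N k)
      simp only [hN k, Nat.cast_zero, zero_mul] at tel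
      simp only [hqq]
      rw [tel]
    have U : Tendsto (fun k => ∑ i ∈ Finset.range (N k), x k i * (d k i ^ 2 - q k i)) atTop (nhds 0) := by
      rw [Metric.tendsto_nhds]
      intro ε hε
      have e0 : 0 < ε ^ 2 / (X * Y + 1) := by positivity
      filter_upwards [hd _ e0, hq.eventually (gt_mem_nhds (show Q t < Q t + 1 by linarith))] with k hk1 hk2
      have hk2' : ∑ i ∈ Finset.range (N k), d k i ^ 2 ≤ Q t + 1 := by rw [hdd]; exact hk2.le
      rw [Real.dist_eq, sub_zero]
      refine (cs_bound (N k) (x k) (fun i => d k i ^ 2 - q k i) (e := ε ^ 2 / (X * Y + 1)) (X := X) (Y := Y)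
        e0.le pX (fun i hik => by rw [hdd, hqq]; exact hk1 i hik) ?_ ?_).trans_lt ?_
      · calc ∑ i ∈ Finset.range (N k), x k i ^ 2
            ≤ ∑ i ∈ Finset.range (N k), K ^ 8 * (2 * d k i ^ 2 + 2 * K * a k i) := by
              refine Finset.sum_le_sum (fun i hik => ?_)
              have hik := Finset.mem_range.1 hik
              obtain ⟨u1, u2⟩ := bgi k i hik
              obtain ⟨v1, v2⟩ := bgj k i hik
              obtain ⟨a1, a2⟩ := ba k i hik
              have e1 : gj k i - gi k i = - (gi k i * gj k i * (d k i - a k i)) := by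
                have p1 := hc.trans_le (hcG _ (g0 k i) (gt' k i hik.le))
                have p2 := hc.trans_le (hcG _ (g0 k (i + 1)) (gt' k (i + 1) hik))
                have e0 := inv_diff p1 p2
                simp only [hgi, hgj, hdd, ha]
                rw [e0]
                ring
              have e2 : x k i ^ 2 = (gi k i ^ 6 * gj k i ^ 2) * (d k i - a k i) ^ 2 := by
                simp only [hx, e1]; ring
              rw [e2]
              have e3 : gi k i ^ 6 * gj k i ^ 2 ≤ K ^ 8 := by
                calc gi k i ^ 6 * gj k i ^ 2 ≤ K ^ 6 * K ^ 2 := by gcongr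
                  _ = K ^ 8 := by ring
              have e4 : (d k i - a k i) ^ 2 ≤ 2 * d k i ^ 2 + 2 * K * a k i := by
                nlinarith [sq_nonneg (d k i + a k i), mul_le_mul_of_nonneg_right a2 a1]
              exact mul_le_mul e3 e4 (sq_nonneg _) (by positivity)
          _ = K ^ 8 * (2 * ∑ i ∈ Finset.range (N k), d k i ^ 2 + 2 * K * ∑ i ∈ Finset.range (N k), a k i) := by
              rw [← Finset.mul_sum, Finset.sum_add_distrib, Finset.mul_sum, Finset.mul_sum]
          _ ≤ X := by
              rw [hX]
              have := sa k
              gcongr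
      · calc ∑ i ∈ Finset.range (N k), |d k i ^ 2 - q k i|
            ≤ ∑ i ∈ Finset.range (N k), (d k i ^ 2 + q k i) := by
              refine Finset.sum_le_sum (fun i hik => ?_)
              have := (bq k i (Finset.mem_range.1 hik)).1
              have := sq_nonneg (d k i)
              rw [abs_le]; constructor <;> linarith
          _ ≤ Y := by
              rw [Finset.sum_add_distrib, sq' k, hY]; linarith
      · rw [Real.sqrt_lt' hε]
        have p : 0 < X * Y + 1 := by positivity
        have : ε ^ 2 / (X * Y + 1) * (X * Y + 1) = ε ^ 2 := div_mul_cancel₀ _ p.ne'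
        nlinarith
    have := hs.add U
    rw [add_zero] at this
    refine this.congr (fun k => ?_)
    rw [← Finset.sum_add_distrib]
    refine Finset.sum_congr rfl (fun i _ => ?_)
    simp only [hx, hgi, hdd, hqq]
    ring
  have T := ((T1.add T2).add (T3.sub T4)).sub hi
  rw [sub_self, add_zero, add_zero] at T
  have hsum : ∀ k, (∑ i ∈ Finset.range (N k), (gi k i ^ 2 + gi k i ^ 2 * gj k i * (a k i - 2 * d k i)
      + q k i * (gi k i ^ 2 * gj k i * gt k i)) * a k i
      + ∑ i ∈ Finset.range (N k), gi k i ^ 2 * gj k i * (d k i ^ 2 - q k i)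
      + (∑ i ∈ Finset.range (N k), gi k i ^ 2 * gt k i * q k i
        - ∑ i ∈ Finset.range (N k), gi k i ^ 2 *
          ∫ u in Ioc (i * h k) ((i + 1 : ℕ) * h k), (m u - Am u)⁻¹ ∂νQ)
      - ∑ i ∈ Finset.range (N k), ((m (i * h k) - A (i * h k))⁻¹) ^ 2 *
        (mt ((i + 1 : ℕ) * h k) - mt (i * h k))) = (m t - A t)⁻¹ - (m 0 - A 0)⁻¹ := by
    intro k
    have tel := Finset.sum_range_sub (fun i : ℕ => (m (i * h k) - A (i * h k))⁻¹) (N k)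
    simp only [hN k, Nat.cast_zero, zero_mul] at tel
    rw [← tel, ← Finset.sum_add_distrib, ← Finset.sum_sub_distrib, ← Finset.sum_add_distrib,
      ← Finset.sum_sub_distrib]
    refine Finset.sum_congr rfl (fun i hik => ?_)
    have hik := Finset.mem_range.1 hik
    have hmtd : mt ((i + 1 : ℕ) * h k) - mt (i * h k) = d k i
        - ∫ u in Ioc (i * h k) ((i + 1 : ℕ) * h k), (m u - Am u)⁻¹ ∂νQ := by
      have hab := gmono k i (i + 1) (by omega)
      have e : Ioc 0 (((i + 1 : ℕ) : ℝ) * h k) = Ioc 0 (i * h k) ∪ Ioc (i * h k) ((i + 1 : ℕ) * h k) :=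
        (Ioc_union_Ioc_eq_Ioc (g0 k i) hab).symm
      rw [hmt _ (g0 k (i + 1)), hmt _ (g0 k i), e, setIntegral_union (Ioc_disjoint_Ioc_of_le le_rfl)
        measurableSet_Ioc
        (Gint.mono_set (Ioc_subset_Ioc le_rfl (gt' k i hik.le)))
        (Gint.mono_set (Ioc_subset_Ioc (g0 k i) (gt' k (i + 1) hik))), hdd]
      ring
    rw [hmtd]
    have := cell_alg (gi := gi k i) (gj := gj k i) (gt := gt k i) (a := a k i) (d := d k i) (q := q k i)
      (Gi := m (i * h k) - A (i * h k)) (Gj := m ((i + 1 : ℕ) * h k) - A ((i + 1 : ℕ) * h k))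
      (J := ∫ u in Ioc (i * h k) ((i + 1 : ℕ) * h k), (m u - Am u)⁻¹ ∂νQ)
      (by rw [hgi]) (by rw [hgj]) (by rw [hgt, ha]; congr 1; ring)
      (hc.trans_le (hcG _ (g0 k i) (gt' k i hik.le)))
      (hc.trans_le (hcG _ (g0 k (i + 1)) (gt' k (i + 1) hik))) (ba k i hik).1 (by rw [hdd, ha]; ring)
    have e1 : (m (i * h k) - A (i * h k))⁻¹ = gi k i := by rw [hgi]
    have e2 : (m ((i + 1 : ℕ) * h k) - A ((i + 1 : ℕ) * h k))⁻¹ = gj k i := by rw [hgj]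
    rw [e1, e2]
    linear_combination -this
  have fin := tendsto_nhds_unique (tendsto_const_nhds) (T.congr hsum)
  have hcongr : ∫ u in Ioc 0 t, ((mm u - Am u)⁻¹ ^ 2 + (mm u - Am u)⁻¹ ^ 2 * (m u - A u)⁻¹
      * (A u - Am u - 2 * (m u - mm u)) + (m u - mm u) ^ 2 * ((mm u - Am u)⁻¹ ^ 2 * (m u - A u)⁻¹
        * (m u - Am u)⁻¹)) ∂νA = ∫ s in Ioc 0 t, (m s - A s)⁻¹ * (m s - Am s)⁻¹ ∂νA := by
    refine setIntegral_congr_fun measurableSet_Ioc (fun u hu => ?_)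
    have h1 := hc.trans_le (Gm_pos u hu.1 hu.2)
    have h2 := hc.trans_le (Gt_pos u hu.1 hu.2)
    have h3 := hc.trans_le (hcG u hu.1.le hu.2)
    beta_reduce
    field_simp
    ring
  rw [hcongr] at fin
  linarith

end Pathwise

theorem inverse_azema_supermartingale_decomposition
    {m0 : MeasurableSpace Ω} (μ : Measure Ω) [IsProbabilityMeasure μ]
    (𝒻 : Filtration ℝ m0)
    (m Ao G Gt QV mt I : ℝ → Ω → ℝ)
    (νAo νQV : Ω → Measure ℝ)
    (hνAofin : ∀ ω, IsLocallyFiniteMeasure (νAo ω))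
    (hνQVfin : ∀ ω, IsLocallyFiniteMeasure (νQV ω))
    (hm : Martingale m 𝒻 μ)
    (hmrc : ∀ ω t, ContinuousWithinAt (fun s => m s ω) (Ici t) t)
    (hAoadp : Adapted 𝒻 Ao)
    (hAomono : ∀ ω, Monotone fun t => Ao t ω)
    (hAorc : ∀ ω t, ContinuousWithinAt (fun s => Ao s ω) (Ici t) t)
    (hνAo : ∀ ω, ∀ a b : ℝ, a ≤ b → (νAo ω (Ioc a b)).toReal = Ao b ω - Ao a ω)
    (hG : ∀ t ω, G t ω = m t ω - Ao t ω)
    (hGt : ∀ t ω, Gt t ω = m t ω - leftLim (fun s => Ao s ω) t)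
    (hGpos : ∀ t ω, 0 < G t ω) (hGtpos : ∀ t ω, 0 < Gt t ω)
    -- `QV = [m,m]` and `νQV` is its pathwise Stieltjes measure:
    (hQV : IsQuadCovar μ m m QV)
    (hνQV : ∀ ω, ∀ a b : ℝ, a ≤ b → (νQV ω (Ioc a b)).toReal = QV b ω - QV a ω)
    -- `m̃ = m − G̃⁻¹ • [m,m]`:
    (hmt : ∀ t ω, 0 ≤ t → mt t ω = m t ω - ∫ s in Ioc 0 t, (Gt s ω)⁻¹ ∂(νQV ω))
    -- `I = G₋⁻² • m̃`:
    (hI : IsStochInt μ (fun s ω => ((G s ω)⁻¹) ^ 2) mt I) :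
    ∀ t : ℝ, 0 < t → ∀ᵐ ω ∂μ,
      (G t ω)⁻¹
        = (G 0 ω)⁻¹ - I t ω + ∫ s in Ioc 0 t, (G s ω)⁻¹ * (Gt s ω)⁻¹ ∂(νAo ω) := by
  intro t ht
  have hpos : ∀ t ω, Ao t ω < m t ω := fun t ω => by
    have := hGpos t ω
    rw [hG] at this; linarith
  have hI' : IsStochInt μ (fun s ω => ((m s ω - Ao s ω)⁻¹) ^ 2) mt I := by
    simpa only [hG] using hI
  obtain ⟨φ, hφ, hω⟩ := assemble hm hAoadp hAomono hpos hmrc hQV hI' ht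
  filter_upwards [hω, path_reg hm hAoadp hAomono hpos hmrc hAorc ht] with ω h1 h2
  obtain ⟨h1, h3, h4, h5⟩ := h1
  obtain ⟨⟨c, hc, hcG⟩, ⟨M, hM⟩, hl⟩ := h2
  have := hνAofin ω
  have := hνQVfin ω
  have := pathK ht (m := fun s => m s ω) (A := fun s => Ao s ω) (Am := leftLim (fun s => Ao s ω))
    (mm := leftLim (fun s => m s ω)) (mt := fun s => mt s ω) (Q := fun s => QV s ω) (I := I t ω)
    (νA := νAo ω) (νQ := νQV ω) (N := fun k => 2 ^ φ k) (h := fun k => t / 2 ^ φ k)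
    (fun k => by positivity) (fun k => by push_cast; field_simp) ((dy_tendsto t).comp hφ)
    (hAomono ω) (hAorc ω) (hmrc ω) (hνAo ω) (hνQV ω)
    (fun u _ _ => (hAomono ω).tendsto_leftLim u)
    (fun u hu hut => by
      obtain ⟨l, hl'⟩ := hl u hu hut
      have e : leftLim (fun s => m s ω) u = l := leftLim_eq_of_tendsto hl'
      rw [e]
      exact hl') hc hcG hM
    (fun s hs => by simpa only [hGt] using hmt s ω hs) h1 h3 h4 h5
  simp only [hG, hGt]
  exact this
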